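/- arXiv:2412.06659 — 2 statements merged into one kernel-verified Lean document; each statement's English description precedes it below -/
import Mathlib

section
/- Let R be a Noetherian local ring and M a nonzero finitely generated Cohen–Macaulay R-module with qpd_R M < ∞. Then M is quasi-perfect, i.e., grade(M,R) = qpd_R M. -/
open CategoryTheory CategoryTheory.Limits Opposite

noncomputable section

variable (R : Type) [CommRing R]

/-- The `i`-th Ext module of two `R`-modules. -/
def extMod (M N : Type) [AddCommGroup M] [Module R M] [AddCommGroup N] [Module R N]
    (i : ℕ) : ModuleCat R :=
  ((Ext R (ModuleCat.{0} R) i).obj (op (ModuleCat.of R M))).obj (ModuleCat.of R N)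

/-- The `i`-th Tor module of two `R`-modules. -/
def torMod (M N : Type) [AddCommGroup M] [Module R M] [AddCommGroup N] [Module R N]
    (i : ℕ) : ModuleCat R :=
  ((Tor (ModuleCat.{0} R) i).obj (ModuleCat.of R M)).obj (ModuleCat.of R N)

/-- `grade(M,N) = inf { i | Ext^i(M,N) ≠ 0 }`, as an extended natural number. -/
def extGrade (M N : Type) [AddCommGroup M] [Module R M] [AddCommGroup N] [Module R N] : ℕ∞ :=
  sInf {c : ℕ∞ | ∃ i : ℕ, c = i ∧ Nontrivial (extMod R M N i)}

/-- `P_R(M,N) = sup { i | Ext^i(M,N) ≠ 0 }`, as an extended natural number. -/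
def extSup (M N : Type) [AddCommGroup M] [Module R M] [AddCommGroup N] [Module R N] : ℕ∞ :=
  sSup {c : ℕ∞ | ∃ i : ℕ, c = i ∧ Nontrivial (extMod R M N i)}

/-- `depth(I, N)`: the supremum of lengths of `N`-regular sequences contained in `I`. -/
def idealDepth (I : Ideal R) (N : Type) [AddCommGroup N] [Module R N] : ℕ∞ :=
  ⨆ rs : {l : List R // (∀ r ∈ l, r ∈ I) ∧ RingTheory.Sequence.IsRegular N l},
    (rs.1.length : ℕ∞)

/-- The depth of a module over a local ring. -/
def moduleDepth [IsLocalRing R] (N : Type) [AddCommGroup N] [Module R N] : ℕ∞ :=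
  idealDepth R (IsLocalRing.maximalIdeal R) N

/-- The Krull dimension of a module: the sup of lengths of chains of primes in its support. -/
def moduleDim (M : Type) [AddCommGroup M] [Module R M] : ℕ∞ :=
  ⨆ c : LTSeries (Module.support R M), (c.length : ℕ∞)

/-- A quasi-projective resolution: a bounded-below complex of projectives whose homologies
are finite direct sums of copies of `M`, not all zero. -/
def IsQuasiProjRes (P : ChainComplex (ModuleCat.{0} R) ℤ)
    (M : Type) [AddCommGroup M] [Module R M] : Prop :=
  (∀ i, Projective (P.X i)) ∧
  (∃ n : ℤ, ∀ i < n, IsZero (P.X i)) ∧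
  (∃ a : ℤ → ℕ, (∃ i, 0 < a i) ∧
    ∀ i, Nonempty ((P.homology i) ≅ ModuleCat.of R (Fin (a i) → M)))

/-- Quasi-projective dimension: `inf { sup P - hsup P }` over bounded quasi-projective
resolutions `P` of `M`.  The condition `sup P - hsup P ≤ n` is encoded as the existence of
a degree `h` with nonzero homology such that `P` vanishes in degrees `> h + n`. -/
def qpd (M : Type) [AddCommGroup M] [Module R M] : ℕ∞ :=
  sInf {c : ℕ∞ | ∃ n : ℕ, c = n ∧ ∃ P : ChainComplex (ModuleCat.{0} R) ℤ,
    IsQuasiProjRes R P M ∧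
    ∃ h : ℤ, ¬ IsZero (P.homology h) ∧ ∀ i, h + n < i → IsZero (P.X i)}

/-- A quasi-injective resolution: a bounded-above complex of injectives whose homologies
are finite direct sums of copies of `M`, not all zero. -/
def IsQuasiInjRes (I : ChainComplex (ModuleCat.{0} R) ℤ)
    (M : Type) [AddCommGroup M] [Module R M] : Prop :=
  (∀ i, Injective (I.X i)) ∧
  (∃ n : ℤ, ∀ i > n, IsZero (I.X i)) ∧
  (∃ b : ℤ → ℕ, (∃ i, 0 < b i) ∧
    ∀ i, Nonempty ((I.homology i) ≅ ModuleCat.of R (Fin (b i) → M)))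

/-- Quasi-injective dimension: `inf { hinf I - inf I }` over bounded quasi-injective
resolutions `I` of `M`. -/
def qid (M : Type) [AddCommGroup M] [Module R M] : ℕ∞ :=
  sInf {c : ℕ∞ | ∃ n : ℕ, c = n ∧ ∃ I : ChainComplex (ModuleCat.{0} R) ℤ,
    IsQuasiInjRes R I M ∧
    ∃ h : ℤ, ¬ IsZero (I.homology h) ∧ ∀ i, i < h - n → IsZero (I.X i)}

/-- Projective dimension, via finite projective resolutions. -/
def projDim (M : Type) [AddCommGroup M] [Module R M] : ℕ∞ :=
  sInf {c : ℕ∞ | ∃ n : ℕ, c = n ∧ ∃ P : ChainComplex (ModuleCat.{0} R) ℤ,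
    (∀ i, Projective (P.X i)) ∧ (∀ i : ℤ, (i < 0 ∨ (n : ℤ) < i) → IsZero (P.X i)) ∧
    Nonempty ((P.homology 0) ≅ ModuleCat.of R M) ∧ ∀ i ≠ 0, IsZero (P.homology i)}

/-- Injective dimension, via finite injective resolutions (in degrees `-n, …, 0`). -/
def injDim (M : Type) [AddCommGroup M] [Module R M] : ℕ∞ :=
  sInf {c : ℕ∞ | ∃ n : ℕ, c = n ∧ ∃ I : ChainComplex (ModuleCat.{0} R) ℤ,
    (∀ i, Injective (I.X i)) ∧ (∀ i : ℤ, (0 < i ∨ i < -(n : ℤ)) → IsZero (I.X i)) ∧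
    Nonempty ((I.homology 0) ≅ ModuleCat.of R M) ∧ ∀ i ≠ 0, IsZero (I.homology i)}

/-- The depth of the localization `N_p` over the local ring `R_p`. -/
def localDepth (p : PrimeSpectrum R) (N : Type) [AddCommGroup N] [Module R N] : ℕ∞ :=
  idealDepth (Localization.AtPrime p.asIdeal)
    (IsLocalRing.maximalIdeal (Localization.AtPrime p.asIdeal))
    (LocalizedModule p.asIdeal.primeCompl N)

end

/-!
Write `k` for the residue field, `t = depth R`, `d = dim M = depth M`, and let `h` be the top degree
with nonzero homology of a quasi-projective resolution `P` that realises `qpd M = n`. Put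
`C_i = P_i / B_i` (the opcycles). Above degree `h` the complex is exact, so `P` resolves `C_h` and
`pd C_h ≤ n`; conversely `pd C_h ≤ m` implies `qpd M ≤ m`, by truncating `P` at the projective module
`C_{h+m}` (`qpd_le`).

The terms of `P` need not be finitely generated, so the usual arguments do not apply to `C_h`
directly. However, `C_{i+1}` maps onto the kernel of `P_i → C_i` with kernel `H_{i+1}(P) ≅ M^a`,
and a Schanuel-type argument (`StablyFinite.step`) shows inductively that every `C_i` becomes
isomorphic, after adding projective summands, to a finite module `C₀` with `Ext^j(k, C₀) = 0`
for `j < min d t`. Three consequences give the result.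

* Upper bound for `qpd`: the Auslander–Buchsbaum argument applied to `C₀` (`StablyFinite.pdLT`)
  yields `pd C_h ≤ t - d`, hence `qpd M ≤ t - d`.
* Lower bound for the grade: `Ext^i(M, R) = 0` for `i < t - d` (`ischebeck`), hence
  `t - d ≤ grade M`.
* Grade at most `qpd`: if `Ext^i(M, R) = 0` for all `i ≤ n`, then `Hom(M, C_h) = 0` because
  `pd C_h ≤ n`, while `C_h` contains `H_h(P)`, a nonzero sum of copies of `M`
  (`exists_not_extVanish`).

The last point also shows that `Ext^j(k, R) ≠ 0` for some `j`, so `t` may be taken to be the least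
such `j`, and no identification with lengths of regular sequences in `R` is needed.
-/

/-! ### Vanishing of Ext -/

/-- `Ext^i_R(L, N) = 0`, for `Abelian.Ext`, which carries the long exact sequences;
`extMod_subsingleton_iff` compares it with `extMod`. -/
def ExtVanish (R : Type) [CommRing R] (L N : Type) [AddCommGroup L] [Module R L]
    [AddCommGroup N] [Module R N] (i : ℕ) : Prop :=
  Subsingleton (Abelian.Ext (ModuleCat.of R L) (ModuleCat.of R N) i)

namespace ExtVanish

variable {R : Type} [CommRing R] {L A B C : Type} [AddCommGroup L] [Module R L]
  [AddCommGroup A] [Module R A] [AddCommGroup B] [Module R B] [AddCommGroup C] [Module R C]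

theorem eq_zero {n : ℕ} (h : ExtVanish R L A n)
    (x : Abelian.Ext (ModuleCat.of R L) (ModuleCat.of R A) n) : x = 0 :=
  @Subsingleton.elim _ h _ _

theorem of_eq_zero {n : ℕ}
    (h : ∀ x : Abelian.Ext (ModuleCat.of R L) (ModuleCat.of R A) n, x = 0) : ExtVanish R L A n :=
  ⟨fun x y => by rw [h x, h y]⟩

/-- The short complex of modules attached to two composable linear maps forming an exact pair. -/
def ses {f : A →ₗ[R] B} {g : B →ₗ[R] C} (hfg : Function.Exact f g) :
    ShortComplex (ModuleCat.{0} R) :=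
  ShortComplex.mk (ModuleCat.ofHom f) (ModuleCat.ofHom g) (by
    rw [← ModuleCat.ofHom_comp, hfg.linearMap_comp_eq_zero]; rfl)

theorem ses_shortExact {f : A →ₗ[R] B} {g : B →ₗ[R] C} (hf : Function.Injective f)
    (hfg : Function.Exact f g) (hg : Function.Surjective g) : (ses hfg).ShortExact where
  exact := ModuleCat.shortComplex_exact _ hfg
  mono_f := (ModuleCat.mono_iff_injective _).2 hf
  epi_g := (ModuleCat.epi_iff_surjective _).2 hg

section LES
variable {f : A →ₗ[R] B} {g : B →ₗ[R] C} (hf : Function.Injective f)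
    (hfg : Function.Exact f g) (hg : Function.Surjective g)
include hf hfg hg

/-- `Ext^n(L, C) → Ext^{n+1}(L, A) → Ext^{n+1}(L, B)` is exact. -/
theorem cov₁ {n : ℕ} (hC : ExtVanish R L C n) (hB : ExtVanish R L B (n + 1)) :
    ExtVanish R L A (n + 1) :=
  of_eq_zero fun x => by
    obtain ⟨y, rfl⟩ := Abelian.Ext.covariant_sequence_exact₁ _ (ses_shortExact hf hfg hg) x
      (hB.eq_zero _) rfl
    rw [show y = 0 from hC.eq_zero y, Abelian.Ext.zero_comp]
    rfl

/-- `Ext^n(L, A) → Ext^n(L, B) → Ext^n(L, C)` is exact. -/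
theorem cov₂ {n : ℕ} (hA : ExtVanish R L A n) (hC : ExtVanish R L C n) : ExtVanish R L B n :=
  of_eq_zero fun x => by
    obtain ⟨y, rfl⟩ := Abelian.Ext.covariant_sequence_exact₂ _ (ses_shortExact hf hfg hg) x
      (hC.eq_zero _)
    rw [show y = 0 from hA.eq_zero y, Abelian.Ext.zero_comp]
    rfl

/-- `Ext^n(L, B) → Ext^n(L, C) → Ext^{n+1}(L, A)` is exact. -/
theorem cov₃ {n : ℕ} (hB : ExtVanish R L B n) (hA : ExtVanish R L A (n + 1)) :
    ExtVanish R L C n :=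
  of_eq_zero fun x => by
    obtain ⟨y, rfl⟩ := Abelian.Ext.covariant_sequence_exact₃ _ (ses_shortExact hf hfg hg) x rfl
      (hA.eq_zero _)
    rw [show y = 0 from hB.eq_zero y, Abelian.Ext.zero_comp]
    rfl

/-- `Ext^n(C, L) → Ext^n(B, L) → Ext^n(A, L)` is exact. -/
theorem con₂ {n : ℕ} (hA : ExtVanish R A L n) (hC : ExtVanish R C L n) : ExtVanish R B L n :=
  of_eq_zero fun x => by
    obtain ⟨y, rfl⟩ := Abelian.Ext.contravariant_sequence_exact₂ (ses_shortExact hf hfg hg) _ x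
      (hA.eq_zero _)
    rw [show y = 0 from hC.eq_zero y, Abelian.Ext.comp_zero]
    rfl

end LES

theorem zero_iff : ExtVanish R L A 0 ↔ ∀ φ : L →ₗ[R] A, φ = 0 := by
  have : ExtVanish R L A 0 ↔ Subsingleton (L →ₗ[R] A) :=
    (Abelian.Ext.homEquiv₀.trans ModuleCat.homEquiv).subsingleton_congr
  rw [this]
  exact ⟨fun _ φ => Subsingleton.elim _ _, fun h => ⟨fun a b => by rw [h a, h b]⟩⟩

theorem of_injective_zero {f : A →ₗ[R] B} (hf : Function.Injective f) (h : ExtVanish R L B 0) :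
    ExtVanish R L A 0 :=
  zero_iff.2 fun φ => by
    have := zero_iff.1 h (f ∘ₗ φ)
    ext x
    exact hf (by simpa using LinearMap.congr_fun this x)

/-- The linear maps `A → B` inducing zero on `Ext^n(L, -)`. -/
def killing (L A B : Type) [AddCommGroup L] [Module R L]
    [AddCommGroup A] [Module R A] [AddCommGroup B] [Module R B] (n : ℕ) :
    Submodule R (A →ₗ[R] B) where
  carrier := {φ | ∀ x : Abelian.Ext (ModuleCat.of R L) (ModuleCat.of R A) n,
    x.comp (Abelian.Ext.mk₀ (ModuleCat.ofHom φ)) (add_zero n) = 0}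
  add_mem' := fun {φ ψ} h h' x => by
    rw [show ModuleCat.ofHom (φ + ψ) = ModuleCat.ofHom φ + ModuleCat.ofHom ψ from rfl,
      Abelian.Ext.mk₀_add, Abelian.Ext.comp_add, h x, h' x, add_zero]
  zero_mem' := fun x => by
    rw [show ModuleCat.ofHom (0 : A →ₗ[R] B) = 0 from rfl, Abelian.Ext.mk₀_zero,
      Abelian.Ext.comp_zero]
  smul_mem' := fun r φ h x => by
    rw [show ModuleCat.ofHom (r • φ) = r • ModuleCat.ofHom φ from rfl,
      Abelian.Ext.mk₀_smul, Abelian.Ext.comp_smul, h x, smul_zero]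

theorem comp_mem_killing {n : ℕ} (φ : A →ₗ[R] B) (ψ : B →ₗ[R] C) (h : ExtVanish R L B n) :
    ψ ∘ₗ φ ∈ killing L A C n := fun x => by
  rw [ModuleCat.ofHom_comp, ← Abelian.Ext.mk₀_comp_mk₀, ← Abelian.Ext.comp_assoc_of_second_deg_zero,
    h.eq_zero (x.comp _ _), Abelian.Ext.zero_comp]

theorem of_id_mem {n : ℕ} (h : LinearMap.id ∈ killing (R := R) L A A n) : ExtVanish R L A n :=
  of_eq_zero fun x => by
    have := h x
    rwa [ModuleCat.ofHom_id, Abelian.Ext.comp_mk₀_id] at this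

theorem of_retract {n : ℕ} (i : A →ₗ[R] B) (p : B →ₗ[R] A) (hip : p ∘ₗ i = LinearMap.id)
    (h : ExtVanish R L B n) : ExtVanish R L A n :=
  of_id_mem (hip ▸ comp_mem_killing i p h)

theorem of_equiv {n : ℕ} (e : A ≃ₗ[R] B) (h : ExtVanish R L B n) : ExtVanish R L A n :=
  of_retract e.toLinearMap e.symm.toLinearMap (by ext; simp) h

theorem pi {n : ℕ} (a : ℕ) (h : ExtVanish R L A n) : ExtVanish R L (Fin a → A) n :=
  of_id_mem <| by
    have : (LinearMap.id : (Fin a → A) →ₗ[R] (Fin a → A)) =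
        ∑ i, LinearMap.single R (fun _ => A) i ∘ₗ LinearMap.proj i := by
      apply LinearMap.ext
      intro x
      simp [LinearMap.sum_apply, Finset.univ_sum_single]
    rw [this]
    exact Submodule.sum_mem _ fun i _ => comp_mem_killing _ _ h

theorem of_finite_projective [Module.Finite R A] [Module.Projective R A] {n : ℕ}
    (h : ExtVanish R L R n) : ExtVanish R L A n := by
  obtain ⟨m, f, hf⟩ := Module.Finite.exists_fin' R A
  obtain ⟨s, hs⟩ := Module.projective_lifting_property f LinearMap.id hf
  exact of_retract s f hs (h.pi m)

end ExtVanish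

section

variable {R : Type} [CommRing R]

/-! ### Comparison of the two definitions of Ext -/

theorem extMod_iff_exactAt {X Y : ModuleCat.{0} R} (P : ProjectiveResolution X) (n : ℕ) :
    Subsingleton ((((Ext R (ModuleCat.{0} R) n).obj (op X)).obj Y : ModuleCat R)) ↔
      (P.complex.linearYonedaObj R Y).ExactAt n := by
  rw [HomologicalComplex.exactAt_iff_isZero_homology,
    ← ModuleCat.isZero_iff_subsingleton]
  exact (P.isoExt n Y).isZero_iff

theorem extMod_iff_succ {X Y : ModuleCat.{0} R} (P : ProjectiveResolution X) (n : ℕ) :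
    Subsingleton ((((Ext R (ModuleCat.{0} R) (n + 1)).obj (op X)).obj Y : ModuleCat R)) ↔
      ∀ f : P.complex.X (n + 1) ⟶ Y, P.complex.d (n + 2) (n + 1) ≫ f = 0 →
        ∃ g : P.complex.X n ⟶ Y, P.complex.d (n + 1) n ≫ g = f := by
  rw [extMod_iff_exactAt P, HomologicalComplex.exactAt_iff' _ n (n + 1) (n + 2)
    (by simp) (by simp), ShortComplex.moduleCat_exact_iff]
  rfl

theorem extMod_iff_zero {X Y : ModuleCat.{0} R} (P : ProjectiveResolution X) :
    Subsingleton ((((Ext R (ModuleCat.{0} R) 0).obj (op X)).obj Y : ModuleCat R)) ↔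
      ∀ f : P.complex.X 0 ⟶ Y, P.complex.d 1 0 ≫ f = 0 → f = 0 := by
  rw [extMod_iff_exactAt P, HomologicalComplex.exactAt_iff' _ 0 0 1
    (by simp) (by simp), ShortComplex.moduleCat_exact_iff]
  have key : ∀ x, ((P.complex.linearYonedaObj R Y).sc' 0 0 1).f x = 0 := by
    intro x
    have : ((P.complex.linearYonedaObj R Y).sc' 0 0 1).f = 0 :=
      (P.complex.linearYonedaObj R Y).shape 0 0 (by simp)
    rw [this]; rfl
  constructor
  · intro h f hf
    obtain ⟨x, hx⟩ := h f hf
    rw [← hx]; exact key x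
  · intro h f hf
    exact ⟨0, by rw [key]; exact (h f hf).symm⟩

theorem extVanish_iff_succ {X Y : ModuleCat.{0} R} (P : ProjectiveResolution X) (n : ℕ) :
    Subsingleton (Abelian.Ext X Y (n + 1)) ↔
      ∀ f : P.complex.X (n + 1) ⟶ Y, P.complex.d (n + 2) (n + 1) ≫ f = 0 →
        ∃ g : P.complex.X n ⟶ Y, P.complex.d (n + 1) n ≫ g = f := by
  constructor
  · intro h f hf
    exact (P.extMk_eq_zero_iff f (n + 2) rfl hf n rfl).1 (Subsingleton.elim _ _)
  · intro h
    have : ∀ x : Abelian.Ext X Y (n + 1), x = 0 := by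
      intro x
      obtain ⟨f, hf, rfl⟩ := P.extMk_surjective x (n + 2) rfl
      exact (P.extMk_eq_zero_iff f (n + 2) rfl hf n rfl).2 (h f hf)
    exact ⟨fun a b => by rw [this a, this b]⟩

theorem extVanish_iff_zero {X Y : ModuleCat.{0} R} (P : ProjectiveResolution X) :
    Subsingleton (Abelian.Ext X Y 0) ↔
      ∀ f : P.complex.X 0 ⟶ Y, P.complex.d 1 0 ≫ f = 0 → f = 0 := by
  rw [Abelian.Ext.homEquiv₀.subsingleton_congr]
  constructor
  · intro h f hf
    have hex := P.exact₀
    have he : Epi (P.π.f 0) := inferInstance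
    rw [← hex.g_desc f hf]
    have : hex.desc f hf = 0 := Subsingleton.elim (α := X ⟶ Y) _ _
    rw [this, comp_zero]
  · intro h
    have : ∀ x : X ⟶ Y, x = 0 := by
      intro x
      have he : Epi (P.π.f 0) := inferInstance
      have : P.π.f 0 ≫ (show ((ChainComplex.single₀ (ModuleCat.{0} R)).obj X).X 0 ⟶ Y from x) = 0 :=
        h _ (by rw [← Category.assoc, P.complex_d_comp_π_f_zero, zero_comp])
      exact (cancel_epi (P.π.f 0)).1 (this.trans comp_zero.symm)
    exact ⟨fun a b => by rw [this a, this b]⟩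

theorem extMod_subsingleton_iff (M N : Type) [AddCommGroup M] [Module R M]
    [AddCommGroup N] [Module R N] (i : ℕ) :
    Subsingleton (extMod R M N i) ↔ ExtVanish R M N i := by
  obtain ⟨⟨P⟩⟩ := (inferInstance : HasProjectiveResolution (ModuleCat.of R M))
  unfold extMod ExtVanish
  cases i with
  | zero => rw [extMod_iff_zero P, extVanish_iff_zero P]
  | succ n => rw [extMod_iff_succ P, extVanish_iff_succ P]

/-! ### Vanishing of Ext over a local ring -/

theorem ExtVanish.of_subsingleton_left {N A : Type} [AddCommGroup N] [Module R N]
    [AddCommGroup A] [Module R A] [Subsingleton N] (i : ℕ) : ExtVanish R N A i := by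
  refine ExtVanish.of_eq_zero fun x => ?_
  have h0 : 𝟙 (ModuleCat.of R N) = 0 :=
    (ModuleCat.isZero_of_subsingleton (ModuleCat.of R N)).eq_of_src _ _
  rw [← Abelian.Ext.mk₀_id_comp x, h0, Abelian.Ext.mk₀_zero, Abelian.Ext.zero_comp]

theorem ExtVanish.of_equiv_left {N N' A : Type} [AddCommGroup N] [Module R N]
    [AddCommGroup N'] [Module R N'] [AddCommGroup A] [Module R A] (e : N' ≃ₗ[R] N) {i : ℕ}
    (h : ExtVanish R N' A i) : ExtVanish R N A i :=
  ExtVanish.con₂ (A := N') (C := PUnit.{1}) (f := e.toLinearMap) (g := 0) e.injective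
    ((e.toLinearMap.exact_zero_iff_surjective _).2 e.surjective)
    (Function.surjective_to_subsingleton _) h (.of_subsingleton_left i)

section Local

variable [IsNoetherianRing R] [IsLocalRing R]

open IsLocalRing

theorem extVanish_residueField_of_isRegular (M : Type) [AddCommGroup M] [Module R M]
    [Module.Finite R M] [Nontrivial M] (rs : List R) (mem : ∀ r ∈ rs, r ∈ maximalIdeal R)
    (reg : RingTheory.Sequence.IsRegular M rs) (j : ℕ) (hj : j < rs.length) :
    ExtVanish R (ResidueField R) M j := by
  refine ModuleCat.subsingleton_ext_of_exists_isRegular (maximalIdeal R)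
    (ModuleCat.of R (ResidueField R)) ?_ (ModuleCat.of R M) ?_ rs mem reg j hj
  · have : Module.annihilator R (ResidueField R) = maximalIdeal R :=
      Ideal.annihilator_quotient
    rw [Module.support_eq_zeroLocus]
    exact this ▸ le_rfl
  · exact lt_top_iff_ne_top.2 (Submodule.top_ne_ideal_smul_of_le_jacobson_annihilator
      (maximalIdeal_le_jacobson _)).symm

/-- A form of Ischebeck's theorem: `Ext^i(N, R)` vanishes for `i < depth R - dim N`.
A prime filtration reduces to `N = R ⧸ p`. For `p` not maximal, an element `x` of the maximal ideal
outside `p` is `N`-regular; induction on the dimension applied to `N ⧸ x N` shows that `x` acts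
surjectively on the finite module `Ext^i(N, R)`, which vanishes by Nakayama's lemma. -/
theorem ischebeck (d : ℕ) : ∀ (i : ℕ) (N : Type) [AddCommGroup N] [Module R N] [Module.Finite R N],
    Module.supportDim R N < d → (∀ j < i + d, ExtVanish R (ResidueField R) R j) →
    ExtVanish R N R i := by
  induction d with
  | zero =>
    intro i N _ _ _ hd _
    have : Module.supportDim R N = ⊥ := by
      by_contra h
      have hN := (Module.supportDim_ne_bot_iff_nontrivial R N).1 h
      have : (0 : WithBot ℕ∞) ≤ Module.supportDim R N := by
        unfold Module.supportDim
        have : Nonempty (Module.support R N) := (Module.nonempty_support_iff.2 hN).to_subtype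
        exact Order.krullDim_nonneg
      exact absurd hd (not_lt.2 (by simpa using this))
    have := (Module.supportDim_eq_bot_iff_subsingleton R N).1 this
    exact .of_subsingleton_left i
  | succ d ih =>
    intro i N _ _ hN
    induction hN using IsNoetherianRing.induction_on_isQuotientEquivQuotientPrime R with
    | subsingleton N => exact fun _ _ => .of_subsingleton_left i
    | exact N₁ N₂ N₃ f g hf hg hfg h₁ h₃ =>
      intro hd hk
      exact ExtVanish.con₂ hf hfg hg
        (h₁ ((Module.supportDim_le_of_injective f hf).trans_lt hd) hk)
        (h₃ ((Module.supportDim_le_of_surjective g hg).trans_lt hd) hk)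
    | quotient N p e =>
      intro hd hk
      by_cases hp : p.asIdeal = maximalIdeal R
      · have e' : ResidueField R ≃ₗ[R] N :=
          (Submodule.quotEquivOfEq (maximalIdeal R) p.asIdeal hp.symm).trans e.symm
        exact .of_equiv_left e' (hk i (by omega))
      · obtain ⟨x, hxm, hxp⟩ : ∃ x ∈ maximalIdeal R, x ∉ p.asIdeal := by
          by_contra! h
          exact hp (le_antisymm (le_maximalIdeal p.2.ne_top) h)
        have reg : IsSMulRegular N x := by
          have h1 : IsSMulRegular (R ⧸ p.asIdeal) x := by
            rw [isSMulRegular_quotient_iff_mem_of_smul_mem]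
            intro y hy
            exact (p.2.mem_or_mem hy).resolve_left hxp
          intro a b hab
          exact e.injective (h1 (by simpa using congrArg e hab))
        have hdim := Module.supportDim_quotSMulTop_succ_eq_supportDim reg hxm
        have h1 : ExtVanish R (QuotSMulTop x N) R (1 + i) := by
          rw [add_comm]
          refine ih (i + 1) _ ?_ (fun j hj => hk j (by omega))
          rw [← hdim] at hd
          exact lt_of_add_lt_add_right (a := 1) (by simpa using hd)
        have hfin : Module.Finite R (Abelian.Ext (ModuleCat.of R N) (ModuleCat.of R R) i) :=
          inferInstance
        have key : ∀ z : Abelian.Ext (ModuleCat.of R N) (ModuleCat.of R R) i,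
            (Abelian.Ext.mk₀ (x • 𝟙 (ModuleCat.of R N))).comp z (zero_add i) = x • z := by
          intro z
          rw [Abelian.Ext.mk₀_smul, Abelian.Ext.smul_comp, Abelian.Ext.mk₀_id_comp]
        -- multiplication by `x` is onto on the finite module `Ext^i(N, R)`
        have hsurj : ∀ y : Abelian.Ext (ModuleCat.of R N) (ModuleCat.of R R) i,
            ∃ z, x • z = y := by
          intro y
          obtain ⟨z, hz⟩ := Abelian.Ext.contravariant_sequence_exact₁
            (IsSMulRegular.smulShortComplex_shortExact (M := ModuleCat.of R N) reg) _ y rfl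
            (h1.eq_zero _)
          exact ⟨z, (key z).symm.trans hz⟩
        by_contra hne
        have : Nontrivial (Abelian.Ext (ModuleCat.of R N) (ModuleCat.of R R) i) :=
          not_subsingleton_iff_nontrivial.1 hne
        refine Submodule.top_ne_pointwise_smul_of_mem_jacobson_annihilator
          (R := R) (M := Abelian.Ext (ModuleCat.of R N) (ModuleCat.of R R) i)
          (r := x) (maximalIdeal_le_jacobson _ hxm) ?_
        refine (eq_top_iff.2 fun y _ => ?_).symm
        obtain ⟨z, rfl⟩ := hsurj y
        exact Submodule.smul_mem_pointwise_smul _ _ _ trivial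

end Local

/-! ### Projective dimension and the Auslander–Buchsbaum argument -/

/-- `pd_R C < n`. -/
def PdLT (R : Type) [CommRing R] (C : Type) [AddCommGroup C] [Module R C] (n : ℕ) : Prop :=
  HasProjectiveDimensionLT (ModuleCat.of R C) n

namespace PdLT

variable {A B C : Type} [AddCommGroup A] [Module R A] [AddCommGroup B] [Module R B]
  [AddCommGroup C] [Module R C]

theorem one_iff : PdLT R C 1 ↔ Module.Projective R C :=
  projective_iff_hasProjectiveDimensionLT_one.symm.trans
    (IsProjective.iff_projective (R := R) C).symm

theorem zero [Subsingleton C] : PdLT R C 0 :=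
  (ModuleCat.isZero_of_subsingleton (ModuleCat.of R C)).hasProjectiveDimensionLT_zero

theorem mono {m n : ℕ} (h : PdLT R C m) (hmn : m ≤ n) : PdLT R C n :=
  have : HasProjectiveDimensionLT (ModuleCat.of R C) m := h
  hasProjectiveDimensionLT_of_ge _ m n hmn

theorem of_retract {n : ℕ} (i : A →ₗ[R] B) (p : B →ₗ[R] A) (hip : p ∘ₗ i = LinearMap.id)
    (h : PdLT R B n) : PdLT R A n :=
  have : HasProjectiveDimensionLT (ModuleCat.of R B) n := h
  Retract.hasProjectiveDimensionLT
    (X := ModuleCat.of R A) (Y := ModuleCat.of R B)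
    { i := ModuleCat.ofHom i, r := ModuleCat.ofHom p,
      retract := by rw [← ModuleCat.ofHom_comp, hip]; rfl } n

section
variable {f : A →ₗ[R] B} {g : B →ₗ[R] C} (hf : Function.Injective f)
    (hfg : Function.Exact f g) (hg : Function.Surjective g)
include hf hfg hg

theorem syzygy [Module.Projective R B] {n : ℕ} (h : PdLT R C (n + 2)) : PdLT R A (n + 1) :=
  ((ExtVanish.ses_shortExact hf hfg hg).hasProjectiveDimensionLT_X₃_iff n
    ((IsProjective.iff_projective (R := R) B).1 inferInstance)).1 h

theorem of_syzygy [Module.Projective R B] {n : ℕ} (h : PdLT R A (n + 1)) : PdLT R C (n + 2) :=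
  ((ExtVanish.ses_shortExact hf hfg hg).hasProjectiveDimensionLT_X₃_iff n
    ((IsProjective.iff_projective (R := R) B).1 inferInstance)).2 h

theorem middle {n : ℕ} (hA : PdLT R A n) (hC : PdLT R C n) : PdLT R B n :=
  (ExtVanish.ses_shortExact hf hfg hg).hasProjectiveDimensionLT_X₂ n hA hC

end

theorem prod {n : ℕ} (hA : PdLT R A n) (hC : PdLT R C n) : PdLT R (A × C) n :=
  middle (f := LinearMap.inl R A C) (g := LinearMap.snd R A C) LinearMap.inl_injective
    Function.Exact.inl_snd LinearMap.snd_surjective hA hC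

/-- Projective dimension (when at least `0`) is insensitive to projective summands. -/
theorem of_stable_equiv {n : ℕ} {Q Q₀ : Type} [AddCommGroup Q] [Module R Q] [AddCommGroup Q₀]
    [Module R Q₀] [Module.Projective R Q] (e : (C × Q) ≃ₗ[R] (A × Q₀)) (h : PdLT R C (n + 1)) :
    PdLT R A (n + 1) :=
  of_retract (e.symm.toLinearMap ∘ₗ LinearMap.inl R A Q₀)
    (LinearMap.fst R A Q₀ ∘ₗ e.toLinearMap) (by ext; simp)
    (h.prod ((one_iff.2 inferInstance).mono (by omega)))

end PdLT

/-- The maximal ideal annihilates `Ext^n(k, -)`. -/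
theorem smul_mem_killing [IsLocalRing R] {A B : Type} [AddCommGroup A] [Module R A]
    [AddCommGroup B] [Module R B]
    {a : R} (ha : a ∈ IsLocalRing.maximalIdeal R) (ψ : A →ₗ[R] B) (n : ℕ) :
    a • ψ ∈ ExtVanish.killing (IsLocalRing.ResidueField R) A B n := by
  intro x
  have h0 : a • 𝟙 (ModuleCat.of R (IsLocalRing.ResidueField R)) = 0 := by
    ext y
    obtain ⟨y, rfl⟩ := IsLocalRing.residue_surjective y
    change a • IsLocalRing.residue R y = 0
    rw [Algebra.smul_def]
    exact (congrArg (· * _) ((IsLocalRing.residue_eq_zero_iff a).2 ha)).trans (zero_mul _)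
  have key : ∀ z : Abelian.Ext (ModuleCat.of R (IsLocalRing.ResidueField R)) (ModuleCat.of R B) n,
      a • z = 0 := by
    intro z
    rw [← Abelian.Ext.mk₀_id_comp z, ← Abelian.Ext.smul_comp, ← Abelian.Ext.mk₀_smul, h0,
      Abelian.Ext.mk₀_zero, Abelian.Ext.zero_comp]
  rw [show ModuleCat.ofHom (a • ψ) = a • ModuleCat.ofHom ψ from rfl,
      Abelian.Ext.mk₀_smul, Abelian.Ext.comp_smul, key]

/-- If `Ext^{t-1}(L, C) = 0`, then `f` induces an injection on `Ext^t(L, -)`, so that `φ` induces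
zero there as soon as `f ∘ φ` does. -/
theorem mem_killing_of_comp {L D A B C : Type} [AddCommGroup L] [Module R L]
    [AddCommGroup D] [Module R D] [AddCommGroup A] [Module R A] [AddCommGroup B] [Module R B]
    [AddCommGroup C] [Module R C] {f : A →ₗ[R] B} {g : B →ₗ[R] C} (hf : Function.Injective f)
    (hfg : Function.Exact f g) (hg : Function.Surjective g) (φ : D →ₗ[R] A) (t : ℕ)
    (hC : ∀ j, j + 1 = t → ExtVanish R L C j)
    (h : f ∘ₗ φ ∈ ExtVanish.killing L D B t) : φ ∈ ExtVanish.killing L D A t := by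
  intro x
  have hx := h x
  rw [ModuleCat.ofHom_comp, ← Abelian.Ext.mk₀_comp_mk₀,
    ← Abelian.Ext.comp_assoc_of_second_deg_zero] at hx
  cases t with
  | zero =>
    obtain ⟨y, hy⟩ := Abelian.Ext.homEquiv₀.symm.surjective
      (x.comp (Abelian.Ext.mk₀ (ModuleCat.ofHom φ)) (add_zero 0))
    rw [← hy] at hx ⊢
    have hmono : Mono (ModuleCat.ofHom f) := (ModuleCat.mono_iff_injective _).2 hf
    rw [Abelian.Ext.homEquiv₀_symm_apply, Abelian.Ext.mk₀_comp_mk₀,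
      Abelian.Ext.mk₀_eq_zero_iff] at hx
    rw [Abelian.Ext.homEquiv₀_symm_apply, (cancel_mono (ModuleCat.ofHom f)).1
      (hx.trans zero_comp.symm), Abelian.Ext.mk₀_zero]
  | succ n =>
    obtain ⟨y, hy⟩ := Abelian.Ext.covariant_sequence_exact₁ _
      (ExtVanish.ses_shortExact hf hfg hg)
      (x.comp (Abelian.Ext.mk₀ (ModuleCat.ofHom φ)) (add_zero (n + 1))) hx rfl
    rw [← hy, show y = 0 from (hC n rfl).eq_zero y, Abelian.Ext.zero_comp]
    rfl

section Local

variable [IsLocalRing R]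

open IsLocalRing

/-- Over a local ring a finite module has a minimal free cover: the kernel lies in `𝔪 F`. -/
theorem exists_minimal_cover (C : Type) [AddCommGroup C] [Module R C] [Module.Finite R C] :
    ∃ (s : Finset C) (f : (s → R) →ₗ[R] C), Function.Surjective f ∧
      ∀ v, f v = 0 → ∀ i, v i ∈ maximalIdeal R := by
  classical
  have hex : ∃ n, ∃ s : Finset C, s.card = n ∧ Submodule.span R (s : Set C) = ⊤ := by
    obtain ⟨s, hs⟩ := (Module.Finite.fg_top : (⊤ : Submodule R C).FG)
    exact ⟨_, s, rfl, hs⟩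
  obtain ⟨s, hcard, hs⟩ := Nat.find_spec hex
  refine ⟨s, Fintype.linearCombination R (fun j : s => (j : C)), ?_, ?_⟩
  · rw [← LinearMap.range_eq_top, Fintype.range_linearCombination, Subtype.range_coe_subtype]
    exact hs
  · intro v hv i
    by_contra hi
    have hu : IsUnit (v i) := by simpa using hi
    -- a unit coefficient makes the generator `i` redundant
    have hmem : (i : C) ∈ Submodule.span R ((s.erase i : Finset C) : Set C) := by
      rw [Fintype.linearCombination_apply, ← Finset.add_sum_erase _ _ (Finset.mem_univ i)] at hv
      have : v i • (i : C) ∈ Submodule.span R ((s.erase i : Finset C) : Set C) := by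
        rw [eq_neg_of_add_eq_zero_left hv]
        refine Submodule.neg_mem _ (Submodule.sum_mem _ fun j hj => Submodule.smul_mem _ _ ?_)
        refine Submodule.subset_span ?_
        simp only [Finset.coe_erase]
        exact ⟨j.2, fun h => (Finset.mem_erase.1 hj).1 (Subtype.ext h)⟩
      obtain ⟨u, hu⟩ := hu
      have h2 := Submodule.smul_mem _ (↑u⁻¹ : R) this
      rwa [← hu, smul_smul, Units.inv_mul, one_smul] at h2
    refine Nat.find_min hex (m := (s.erase i).card) ?_ ⟨_, rfl, ?_⟩
    · rw [← hcard]; exact Finset.card_erase_lt_of_mem i.2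
    · rw [eq_top_iff, ← hs, Submodule.span_le]
      intro x hx
      by_cases h : x = i
      · exact h ▸ hmem
      · exact Submodule.subset_span (Finset.mem_coe.2 (Finset.mem_erase.2 ⟨h, hx⟩))

variable [IsNoetherianRing R]

/-- The induction step of the Auslander–Buchsbaum formula: if `t = depth R` and
`Ext^{t-N-1}(k, C) = 0`, then `pd C ≤ N + 1` improves to `pd C ≤ N`.
For `N = 0`, the kernel of a minimal free cover of `C` is free, and its inclusion has coefficients
in the maximal ideal, hence is zero on `Ext^t(k, -)`. It is also injective there, because
`Ext^{t-1}(k, C) = 0`; as `Ext^t(k, R) ≠ 0`, the kernel has rank zero. -/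
theorem pdLT_step (t : ℕ) (htlt : ∀ j < t, ExtVanish R (ResidueField R) R j)
    (ht : ¬ ExtVanish R (ResidueField R) R t) (N : ℕ) :
    ∀ (C : Type) [AddCommGroup C] [Module R C] [Module.Finite R C], PdLT R C (N + 2) →
      (∀ j, j + (N + 1) = t → ExtVanish R (ResidueField R) C j) → PdLT R C (N + 1) := by
  classical
  induction N with
  | zero =>
    intro C _ _ _ hC hk
    obtain ⟨s, f, hf, hmin⟩ := exists_minimal_cover (R := R) C
    have hinj : Function.Injective (LinearMap.ker f).subtype := Subtype.val_injective
    have hex : Function.Exact (LinearMap.ker f).subtype f := LinearMap.exact_subtype_ker_map f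
    have hproj : Module.Projective R (LinearMap.ker f) :=
      PdLT.one_iff.1 (PdLT.syzygy hinj hex hf hC)
    have hfree : Module.Free R (LinearMap.ker f) := Module.free_of_flat_of_isLocalRing
    have hker : IsEmpty (Module.Free.ChooseBasisIndex R (LinearMap.ker f)) := by
      by_contra hne
      rw [not_isEmpty_iff] at hne
      obtain ⟨b₀⟩ := hne
      let b := Module.Free.chooseBasis R (LinearMap.ker f)
      apply ht
      let ι : R →ₗ[R] LinearMap.ker f := LinearMap.toSpanSingleton R _ (b b₀)
      have hι : ι ∈ ExtVanish.killing (ResidueField R) R (LinearMap.ker f) t := by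
        refine mem_killing_of_comp hinj hex hf ι t hk ?_
        have : (LinearMap.ker f).subtype ∘ₗ ι =
            ∑ i, (b b₀).1 i • LinearMap.single R (fun _ : s => R) i := by
          ext i
          simp [ι, LinearMap.sum_apply, Pi.single_apply]
        rw [this]
        exact Submodule.sum_mem _ fun i _ => smul_mem_killing (hmin _ (b b₀).2 i) _ t
      refine ExtVanish.of_id_mem fun x => ?_
      have hid : (LinearMap.id : R →ₗ[R] R) = b.coord b₀ ∘ₗ ι := by
        ext; simp [ι]
      rw [hid, ModuleCat.ofHom_comp, ← Abelian.Ext.mk₀_comp_mk₀,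
        ← Abelian.Ext.comp_assoc_of_second_deg_zero, hι x, Abelian.Ext.zero_comp]
    have hsub : Subsingleton (LinearMap.ker f) :=
      (Module.Free.chooseBasis R (LinearMap.ker f)).repr.toEquiv.subsingleton
    have hbot : LinearMap.ker f = ⊥ := Submodule.subsingleton_iff_eq_bot.1 hsub
    let e : (s → R) ≃ₗ[R] C := LinearEquiv.ofBijective f ⟨LinearMap.ker_eq_bot.1 hbot, hf⟩
    exact PdLT.one_iff.2 (Module.Projective.of_equiv e)
  | succ N ih =>
    intro C _ _ _ hC hk
    obtain ⟨m, f, hf⟩ := Module.Finite.exists_fin' R C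
    have hinj : Function.Injective (LinearMap.ker f).subtype := Subtype.val_injective
    have hex : Function.Exact (LinearMap.ker f).subtype f := LinearMap.exact_subtype_ker_map f
    refine PdLT.of_syzygy hinj hex hf (ih _ (PdLT.syzygy hinj hex hf hC) ?_)
    intro j hj
    cases j with
    | zero =>
      exact ExtVanish.of_injective_zero hinj (ExtVanish.pi m (htlt 0 (by omega)))
    | succ j =>
      exact ExtVanish.cov₁ hinj hex hf (hk j (by omega))
        (ExtVanish.pi m (htlt (j + 1) (by omega)))

end Local

/-! ### Modules that are finite up to projective summands -/

theorem ExtVanish.of_subsingleton {L A : Type} [AddCommGroup L] [Module R L]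
    [AddCommGroup A] [Module R A] [Subsingleton A] (i : ℕ) : ExtVanish R L A i :=
  .of_id_mem (by
    rw [show (LinearMap.id : A →ₗ[R] A) = 0 from LinearMap.ext fun _ => Subsingleton.elim _ _]
    exact Submodule.zero_mem _)

/-- `Ext^i(M, -)` vanishes on a finite module of finite projective dimension as soon as enough
of the groups `Ext^i(M, R)` vanish. -/
theorem ExtVanish.of_pdLT [IsNoetherianRing R] {M : Type} [AddCommGroup M] [Module R M] (n : ℕ) :
    ∀ (s : ℕ) (C : Type) [AddCommGroup C] [Module R C] [Module.Finite R C], PdLT R C (n + 1) →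
      (∀ i ≤ n + s, ExtVanish R M R i) → ExtVanish R M C s := by
  induction n with
  | zero =>
    intro s C _ _ _ hC h
    have := PdLT.one_iff.1 hC
    exact .of_finite_projective (h s (by omega))
  | succ n ih =>
    intro s C _ _ _ hC h
    obtain ⟨m, f, hf⟩ := Module.Finite.exists_fin' R C
    have hinj : Function.Injective (LinearMap.ker f).subtype := Subtype.val_injective
    have hex : Function.Exact (LinearMap.ker f).subtype f := LinearMap.exact_subtype_ker_map f
    exact ExtVanish.cov₃ hinj hex hf (.pi m (h s (by omega)))
      (ih (s + 1) _ (PdLT.syzygy hinj hex hf hC) fun i hi => h i (by omega))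

theorem hom_projective_eq_zero {M Q : Type} [AddCommGroup M] [Module R M] [AddCommGroup Q]
    [Module R Q] [Module.Projective R Q] (h : ∀ φ : M →ₗ[R] R, φ = 0) (φ : M →ₗ[R] Q) : φ = 0 := by
  obtain ⟨s, hs⟩ := Module.projective_def'.1 (inferInstance : Module.Projective R Q)
  have hz : s ∘ₗ φ = 0 := by
    ext x q
    exact LinearMap.congr_fun (h (Finsupp.lapply q ∘ₗ s ∘ₗ φ)) x
  rw [← LinearMap.id_comp φ, ← hs, LinearMap.comp_assoc, hz, LinearMap.comp_zero]

/-- `C` becomes isomorphic, after adding projective summands, to a finite module `C₀` with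
`Ext^j(L, C₀) = 0` for `j < e`. -/
def StablyFinite (R : Type) [CommRing R] (L : Type) [AddCommGroup L] [Module R L] (e : ℕ)
    (C : Type) [AddCommGroup C] [Module R C] : Prop :=
  ∃ C₀ Q Q₀ : ModuleCat.{0} R, Module.Finite R C₀ ∧ Module.Projective R Q ∧
    Module.Projective R Q₀ ∧ Nonempty ((C × Q) ≃ₗ[R] (C₀ × Q₀)) ∧ ∀ j < e, ExtVanish R L C₀ j

theorem StablyFinite.of_subsingleton {L C : Type} [AddCommGroup L] [Module R L] (e : ℕ)
    [AddCommGroup C] [Module R C] [Subsingleton C] : StablyFinite R L e C :=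
  ⟨ModuleCat.of R PUnit, ModuleCat.of R PUnit, ModuleCat.of R PUnit,
    (inferInstance : Module.Finite R PUnit), (inferInstance : Module.Projective R PUnit),
    (inferInstance : Module.Projective R PUnit),
    ⟨(0 : (C × PUnit) ≃ₗ[R] (PUnit × PUnit))⟩,
    fun j _ => ExtVanish.of_subsingleton (A := PUnit) j⟩

/-- Passage to a generalized syzygy: if `ker g` is finite with `Ext^j(L, ker g) = 0` for `j < e`
and `C' / ker g` is the kernel of a surjection `P → C` with `P` projective, then `C'` is stably
finite when `C` is. As in Schanuel's lemma, adding to `C'` the source of `σ₁`, a projective module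
mapping onto a model of `C`, produces a split surjection `Θ` onto a projective module, whose kernel
is an extension of `ker σ` by `ker g`. -/
theorem StablyFinite.step [IsNoetherianRing R] {L C C' P : Type} [AddCommGroup L] [Module R L]
    [AddCommGroup C] [Module R C] [AddCommGroup C'] [Module R C'] [AddCommGroup P] [Module R P]
    [Module.Projective R P] {e : ℕ} (hR : ∀ j < e, ExtVanish R L R j) {π : P →ₗ[R] C}
    (hπ : Function.Surjective π) (g : C' →ₗ[R] P) (hg : LinearMap.range g = LinearMap.ker π)
    [Module.Finite R (LinearMap.ker g)] (hk : ∀ j < e, ExtVanish R L (LinearMap.ker g) j)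
    (hC : StablyFinite R L e C) : StablyFinite R L e C' := by
  obtain ⟨C₀, Q, Q₀, hfin, hQ, hQ₀, ⟨ε⟩, hE⟩ := hC
  obtain ⟨m, σ, hσ⟩ := Module.Finite.exists_fin' R C₀
  let π₁ : (P × Q) →ₗ[R] (C₀ × Q₀) := ε.toLinearMap ∘ₗ π.prodMap LinearMap.id
  let σ₁ : ((Fin m → R) × Q₀) →ₗ[R] (C₀ × Q₀) := σ.prodMap LinearMap.id
  have hπ₁ : Function.Surjective π₁ :=
    ε.surjective.comp (hπ.prodMap Function.surjective_id)
  have hσ₁ : Function.Surjective σ₁ := hσ.prodMap Function.surjective_id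
  have hker : ∀ y, π₁ y = 0 → ∃ c, (g c, 0) = y := by
    rintro ⟨p, q⟩ hy
    have : (π p, q) = (0 : C × Q) := by
      simpa [π₁] using hy
    obtain ⟨hp, hq⟩ := Prod.mk.inj this
    obtain ⟨c, hc⟩ : p ∈ LinearMap.range g := hg ▸ hp
    exact ⟨c, by rw [hc, hq]⟩
  have hπg : ∀ c, π₁ (g c, 0) = 0 := by
    intro c
    have : π (g c) = 0 := by
      have : g c ∈ LinearMap.ker π := hg ▸ LinearMap.mem_range_self g c
      exact this
    simp [π₁, this]
  obtain ⟨lam, hlam⟩ := Module.projective_lifting_property π₁ σ₁ hπ₁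
  have hlam' : ∀ u, π₁ (lam u) = σ₁ u := LinearMap.congr_fun hlam
  let Θ : (C' × ((Fin m → R) × Q₀)) →ₗ[R] (P × Q) :=
    (LinearMap.inl R P Q ∘ₗ g).coprod lam
  have hΘ : ∀ c u, Θ (c, u) = (g c, 0) + lam u := fun c u => rfl
  have hsurj : Function.Surjective Θ := by
    intro y
    obtain ⟨u, hu⟩ := hσ₁ (π₁ y)
    obtain ⟨c, hc⟩ := hker (y - lam u) (by rw [map_sub, hlam', hu, sub_self])
    exact ⟨(c, u), by rw [hΘ, hc, sub_add_cancel]⟩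
  have hN : ∀ c u, Θ (c, u) = 0 → σ u.1 = 0 ∧ u.2 = 0 := by
    intro c u h
    have := congrArg π₁ h
    rw [hΘ, map_add, hπg, zero_add, hlam', map_zero] at this
    exact Prod.mk.inj this
  let a : LinearMap.ker g →ₗ[R] LinearMap.ker Θ :=
    (LinearMap.inl R C' ((Fin m → R) × Q₀) ∘ₗ (LinearMap.ker g).subtype).codRestrict _
      (fun c => by
        change Θ (c.1, 0) = 0
        rw [hΘ, map_zero, c.2]; simp)
  let b : LinearMap.ker Θ →ₗ[R] LinearMap.ker σ :=
    (LinearMap.fst R (Fin m → R) Q₀ ∘ₗ LinearMap.snd R C' ((Fin m → R) × Q₀) ∘ₗ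
      (LinearMap.ker Θ).subtype).codRestrict _ (fun x => (hN x.1.1 x.1.2 x.2).1)
  have ha : Function.Injective a := by
    intro x y hxy
    exact Subtype.ext (Prod.mk.inj (congrArg Subtype.val hxy)).1
  have hab : Function.Exact a b := by
    intro x
    obtain ⟨⟨c, f, q⟩, hx⟩ := x
    constructor
    · intro h
      have hf : f = 0 := congrArg Subtype.val h
      have hq : q = 0 := (hN c (f, q) hx).2
      subst hf hq
      have hc : g c = 0 := by
        have : Θ (c, 0) = 0 := hx
        rw [hΘ, map_zero, add_zero] at this
        exact (Prod.mk.inj this).1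
      exact ⟨⟨c, hc⟩, rfl⟩
    · rintro ⟨y, hy⟩
      rw [← hy]; rfl
  have hb : Function.Surjective b := by
    rintro ⟨f, hf⟩
    obtain ⟨c, hc⟩ := hker (lam (f, 0)) (by
      rw [hlam']
      exact Prod.ext hf rfl)
    refine ⟨⟨(-c, (f, 0)), ?_⟩, rfl⟩
    change Θ (-c, (f, 0)) = 0
    rw [hΘ, ← hc, map_neg]
    simp
  have hinj : Function.Injective (LinearMap.ker σ).subtype := Subtype.val_injective
  have hex : Function.Exact (LinearMap.ker σ).subtype σ := LinearMap.exact_subtype_ker_map σ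
  have hEσ : ∀ j < e, ExtVanish R L (LinearMap.ker σ) j := by
    intro j hj
    cases j with
    | zero => exact .of_injective_zero hinj (.pi m (hR 0 hj))
    | succ j => exact .cov₁ hinj hex hσ (hE j (by omega)) (.pi m (hR _ hj))
  obtain ⟨s, hs⟩ := Module.projective_lifting_property Θ LinearMap.id hsurj
  have hexΘ : Function.Exact (LinearMap.ker Θ).subtype Θ := LinearMap.exact_subtype_ker_map Θ
  refine ⟨ModuleCat.of R (LinearMap.ker Θ), ModuleCat.of R ((Fin m → R) × Q₀),
    ModuleCat.of R (P × Q), ?_, ?_, ?_, ⟨?_⟩, ?_⟩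
  · exact Module.Finite.of_exact hab hb
  · exact (inferInstance : Module.Projective R ((Fin m → R) × Q₀))
  · exact (inferInstance : Module.Projective R (P × Q))
  · exact (hexΘ.splitSurjectiveEquiv Subtype.val_injective ⟨s, hs⟩).1
  · exact fun j hj => ExtVanish.cov₂ ha hab hb (hk j hj) (hEσ j hj)

/-- If `Ext^i(M, R) = 0` for `i ≤ n`, there is no nonzero map from `M` to a stably finite
module of projective dimension at most `n`. -/
theorem StablyFinite.hom_eq_zero [IsNoetherianRing R] {L M C : Type} [AddCommGroup L] [Module R L]
    [AddCommGroup M] [Module R M] [AddCommGroup C] [Module R C] {e n : ℕ}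
    (hC : StablyFinite R L e C) (hpd : PdLT R C (n + 1)) (h : ∀ i ≤ n, ExtVanish R M R i)
    (φ : M →ₗ[R] C) : φ = 0 := by
  obtain ⟨C₀, Q, Q₀, hfin, hQ, hQ₀, ⟨ε⟩, hE⟩ := hC
  have h1 := ExtVanish.zero_iff.1 (ExtVanish.of_pdLT n 0 C₀ (hpd.of_stable_equiv ε) h)
  have h2 := hom_projective_eq_zero (Q := Q₀) (ExtVanish.zero_iff.1 (h 0 (by omega)))
  let ψ : M →ₗ[R] (C₀ × Q₀) := ε.toLinearMap ∘ₗ LinearMap.inl R C Q ∘ₗ φ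
  have hψ : ψ = 0 := by
    ext x
    · exact LinearMap.congr_fun (h1 (LinearMap.fst R C₀ Q₀ ∘ₗ ψ)) x
    · exact LinearMap.congr_fun (h2 (LinearMap.snd R C₀ Q₀ ∘ₗ ψ)) x
  ext x
  have hx : ε (φ x, 0) = 0 := LinearMap.congr_fun hψ x
  exact (Prod.mk.inj (ε.map_eq_zero_iff.1 hx)).1

/-- The Auslander–Buchsbaum bound for stably finite modules: with `t = depth R` and
`depth C₀ ≥ e`, finite projective dimension forces `pd C ≤ t - e`. -/
theorem StablyFinite.pdLT [IsNoetherianRing R] [IsLocalRing R] {C : Type} [AddCommGroup C]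
    [Module R C] {t e n : ℕ} (htlt : ∀ j < t, ExtVanish R (IsLocalRing.ResidueField R) R j)
    (ht : ¬ ExtVanish R (IsLocalRing.ResidueField R) R t)
    (hC : StablyFinite R (IsLocalRing.ResidueField R) e C) (hpd : PdLT R C (n + 1)) :
    PdLT R C (t - e + 1) := by
  obtain ⟨C₀, Q, Q₀, hfin, hQ, hQ₀, ⟨ε⟩, hE⟩ := hC
  have key : ∀ N, PdLT R C₀ (t - e + N + 1) → PdLT R C₀ (t - e + 1) := by
    intro N
    induction N with
    | zero => exact id
    | succ N ih =>
      intro h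
      exact ih (pdLT_step t htlt ht (t - e + N) C₀ h fun j hj => hE j (by omega))
  exact (key n ((hpd.of_stable_equiv ε).mono (by omega))).of_stable_equiv ε.symm

/-! ### Quasi-projective resolutions -/

section Complex

variable (P : ChainComplex (ModuleCat.{0} R) ℤ)

theorem pOpcycles_surjective (j : ℤ) : Function.Surjective (P.pOpcycles j).hom :=
  (ModuleCat.epi_iff_surjective _).1 inferInstance

theorem range_fromOpcycles (j : ℤ) :
    LinearMap.range (P.fromOpcycles (j + 1) j).hom = LinearMap.ker (P.pOpcycles j).hom := by
  have h1 : LinearMap.range (P.d (j + 1) j).hom = LinearMap.ker (P.pOpcycles j).hom :=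
    (ShortComplex.exact_of_g_is_cokernel (ShortComplex.mk _ _ (P.d_pOpcycles (j + 1) j))
      (P.opcyclesIsCokernel (j + 1) j (by simp))).moduleCat_range_eq_ker
  rw [← h1, ← P.p_fromOpcycles, ModuleCat.hom_comp, LinearMap.range_comp_of_range_eq_top]
  exact LinearMap.range_eq_top.2 (pOpcycles_surjective P _)

theorem homologyι_injective (j : ℤ) : Function.Injective (P.homologyι j).hom :=
  (ModuleCat.mono_iff_injective _).1 inferInstance

theorem range_homologyι (j : ℤ) : LinearMap.range (P.homologyι (j + 1)).hom =
    LinearMap.ker (P.fromOpcycles (j + 1) j).hom :=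
  (ShortComplex.exact_of_f_is_kernel
    (ShortComplex.mk _ _ (P.homologyι_comp_fromOpcycles (j + 1) j)) (P.homologyIsKernel (j + 1) j (by simp))).moduleCat_range_eq_ker

theorem nonempty_homology_equiv_ker (j : ℤ) :
    Nonempty (P.homology (j + 1) ≃ₗ[R] LinearMap.ker (P.fromOpcycles (j + 1) j).hom) :=
  ⟨(LinearEquiv.ofInjective _ (homologyι_injective P _)).trans
    (LinearEquiv.ofEq _ _ (range_homologyι P j))⟩

theorem subsingleton_opcycles {j : ℤ} (h : IsZero (P.X j)) : Subsingleton (P.opcycles j) :=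
  have := ModuleCat.subsingleton_of_isZero h
  (pOpcycles_surjective P j).subsingleton

theorem isZero_homology {j : ℤ} (h : IsZero (P.X j)) : IsZero (P.homology j) :=
  have := subsingleton_opcycles P h
  have := (homologyι_injective P j).subsingleton
  ModuleCat.isZero_of_subsingleton _

theorem fromOpcycles_injective {j : ℤ} (h : IsZero (P.homology (j + 1))) :
    Function.Injective (P.fromOpcycles (j + 1) j).hom := by
  obtain ⟨e⟩ := nonempty_homology_equiv_ker P j
  have := ModuleCat.subsingleton_of_isZero h
  have := e.symm.toEquiv.subsingleton
  exact LinearMap.ker_eq_bot.1 (Submodule.eq_bot_of_subsingleton)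

theorem exact_fromOpcycles (j : ℤ) :
    Function.Exact (P.fromOpcycles (j + 1) j).hom (P.pOpcycles j).hom :=
  LinearMap.exact_iff.2 (range_fromOpcycles P j).symm

variable {P}

/-- All modules `X_i / B_i` of a quasi-projective resolution are stably finite: this is true in
low degrees, where they vanish, and `StablyFinite.step` climbs one degree. -/
theorem IsQuasiProjRes.stablyFinite [IsNoetherianRing R] {L M : Type} [AddCommGroup L] [Module R L]
    [AddCommGroup M] [Module R M] [Module.Finite R M] (hP : IsQuasiProjRes R P M) {e : ℕ}
    (hR : ∀ j < e, ExtVanish R L R j) (hM : ∀ j < e, ExtVanish R L M j) (i : ℤ) :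
    StablyFinite R L e (P.opcycles i) := by
  obtain ⟨hproj, ⟨lo, hlo⟩, a, -, ha⟩ := hP
  have key : ∀ k : ℕ, StablyFinite R L e (P.opcycles (lo - 1 + k)) := by
    intro k
    induction k with
    | zero =>
      have := subsingleton_opcycles P (hlo (lo - 1 + (0 : ℕ)) (by simp))
      exact .of_subsingleton e
    | succ k ih =>
      rw [Nat.cast_succ, ← add_assoc]
      set j := lo - 1 + (k : ℤ)
      obtain ⟨ε⟩ := nonempty_homology_equiv_ker P j
      obtain ⟨η⟩ := ha (j + 1)
      let θ : (Fin (a (j + 1)) → M) ≃ₗ[R] LinearMap.ker (P.fromOpcycles (j + 1) j).hom :=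
        η.toLinearEquiv.symm.trans ε
      have := Module.Finite.equiv θ
      have : Module.Projective R (P.X j) :=
        (IsProjective.iff_projective (R := R) (P.X j)).2 (hproj j)
      exact ih.step hR (pOpcycles_surjective P j) _ (range_fromOpcycles P j)
        fun l hl => .of_equiv θ.symm (.pi _ (hM l hl))
  rcases lt_or_ge i lo with h | h
  · have := subsingleton_opcycles P (hlo i h)
    exact .of_subsingleton e
  · obtain ⟨k, hk⟩ := Int.le.dest (show lo - 1 ≤ i by omega)
    exact hk ▸ key k

/-- For `i` at least the top homological degree `h`, the part of the complex in degrees `≥ i` is a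
projective resolution of `X_i / B_i`. -/
theorem pdLT_opcycles (hproj : ∀ i, Projective (P.X i)) {h N : ℤ}
    (hh : ∀ i > h, IsZero (P.homology i)) (hN : ∀ i > N, IsZero (P.X i)) (q : ℕ) :
    ∀ i ≥ h, N < i + q → PdLT R (P.opcycles i) q := by
  induction q with
  | zero =>
    intro i _ hi
    have := subsingleton_opcycles P (hN i (by simpa using hi))
    exact .zero
  | succ q ih =>
    intro i hi hi'
    exact (ExtVanish.ses_shortExact (fromOpcycles_injective P (hh (i + 1) (by omega)))
      (exact_fromOpcycles P i) (pOpcycles_surjective P i)).hasProjectiveDimensionLT_X₃ q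
      (ih (i + 1) (by omega) (by push_cast at hi'; omega))
      (have := hproj i
       hasProjectiveDimensionLT_of_ge (P.X i) 1 (q + 1) (by omega))

/-- Above the top homological degree, `X_{i+m} / B_{i+m}` is an `m`-th syzygy of `X_i / B_i`. -/
theorem projective_opcycles (hproj : ∀ i, Projective (P.X i)) {h : ℤ}
    (hh : ∀ i > h, IsZero (P.homology i)) (m : ℕ) :
    ∀ i ≥ h, PdLT R (P.opcycles i) (m + 1) → Projective (P.opcycles (i + m)) := by
  induction m with
  | zero =>
    intro i _ hpd
    simpa using (IsProjective.iff_projective (R := R) (P.opcycles i)).1 (PdLT.one_iff.1 hpd)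
  | succ m ih =>
    intro i hi hpd
    have := (IsProjective.iff_projective (R := R) (P.X i)).2 (hproj i)
    have h2 := ih (i + 1) (by omega) (PdLT.syzygy
      (fromOpcycles_injective P (hh (i + 1) (by omega)))
      (exact_fromOpcycles P i) (pOpcycles_surjective P i) hpd)
    rwa [show i + ((m + 1 : ℕ) : ℤ) = i + 1 + m by push_cast; ring]

end Complex

/-- The embedding `j ↦ b - j`, whose truncation functor kills the degrees above `b`. -/
def cutEmbedding (b : ℤ) : (ComplexShape.up ℕ).Embedding (ComplexShape.down ℤ) :=
  ComplexShape.Embedding.mk' _ _ (fun j : ℕ => b - j) (fun x y h => by simpa using h)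
    (fun x y => by simp only [ComplexShape.up_Rel, ComplexShape.down_Rel]; omega)

theorem cutEmbedding_f (b : ℤ) (j : ℕ) : (cutEmbedding b).f j = b - j := rfl

instance (b : ℤ) : (cutEmbedding b).IsRelIff where
  rel' i j h := by
    simp only [cutEmbedding_f, ComplexShape.down_Rel, ComplexShape.up_Rel] at h ⊢
    omega

instance (b : ℤ) : (cutEmbedding b).IsTruncGE where
  mem_next {j k'} h := ⟨j + 1, by
    simp only [cutEmbedding_f, ComplexShape.down_Rel] at h ⊢
    push_cast; omega⟩

/-- The truncation replacing `X_b` by `X_b / B_b` and killing the degrees above `b`. -/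
theorem exists_truncation (P : ChainComplex (ModuleCat.{0} R) ℤ) (b : ℤ) :
    ∃ T : ChainComplex (ModuleCat.{0} R) ℤ, (∀ i > b, IsZero (T.X i)) ∧
      (∀ i < b, Nonempty (T.X i ≅ P.X i)) ∧ Nonempty (T.X b ≅ P.opcycles b) ∧
      ∀ i ≤ b, Nonempty (P.homology i ≅ T.homology i) := by
  refine ⟨P.truncGE (cutEmbedding b), fun i hi => ?_, fun i hi => ⟨?_⟩, ⟨?_⟩, fun i hi => ?_⟩
  · exact HomologicalComplex.isZero_extend_X _ _ _ fun j hj => by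
      rw [cutEmbedding_f] at hj; omega
  · refine P.truncGEXIso (cutEmbedding b) (i := (b - i).toNat) ?_ ?_
    · rw [cutEmbedding_f]; omega
    · intro h
      apply h.2 ((b - i).toNat - 1)
      rw [cutEmbedding_f, cutEmbedding_f, ComplexShape.down_Rel]
      omega
  · refine P.truncGEXIsoOpcycles (cutEmbedding b) (i := 0) ?_ ?_
    · rw [cutEmbedding_f]; simp
    · refine (cutEmbedding b).boundaryGE (i' := b + 1) ?_ fun j => ?_
      · rw [cutEmbedding_f]; simp
      · rw [cutEmbedding_f]; omega
  · have : QuasiIsoAt (P.πTruncGE (cutEmbedding b)) i :=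
      P.quasiIsoAt_πTruncGE (cutEmbedding b) (j := (b - i).toNat) (by rw [cutEmbedding_f]; omega)
    exact ⟨isoOfQuasiIsoAt (P.πTruncGE (cutEmbedding b)) i⟩

/-- If `h` is the top homological degree of a quasi-projective resolution, then
`pd (X_h / B_h) ≤ m` implies `qpd M ≤ m`. -/
theorem qpd_le {M : Type} [AddCommGroup M] [Module R M] {P : ChainComplex (ModuleCat.{0} R) ℤ}
    (hP : IsQuasiProjRes R P M) {h : ℤ} (hne : ¬ IsZero (P.homology h))
    (hh : ∀ i > h, IsZero (P.homology i)) {m : ℕ} (hpd : PdLT R (P.opcycles h) (m + 1)) :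
    qpd R M ≤ m := by
  obtain ⟨T, hT, hlt, ⟨eb⟩, hH⟩ := exists_truncation P (h + m)
  obtain ⟨hproj, ⟨lo, hlo⟩, a, ha, hM⟩ := hP
  have hlo' : ¬ h < lo := fun hl => hne (isZero_homology P (hlo h hl))
  refine sInf_le ⟨m, rfl, T, ⟨fun i => ?_, ⟨lo, fun i hi => ?_⟩, a, ha, fun i => ?_⟩, h, ?_, hT⟩
  · rcases lt_trichotomy i (h + m) with hi | rfl | hi
    · obtain ⟨e⟩ := hlt i hi
      exact Projective.of_iso e.symm (hproj i)
    · exact Projective.of_iso eb.symm (projective_opcycles hproj hh m h le_rfl hpd)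
    · exact (hT i hi).projective
  · obtain ⟨e⟩ := hlt i (by omega)
    exact (hlo i hi).of_iso e
  · obtain ⟨η⟩ := hM i
    rcases le_or_gt i (h + m) with hi | hi
    · obtain ⟨e⟩ := hH i hi
      exact ⟨e.symm ≪≫ η⟩
    · exact ⟨(isZero_homology T (hT i hi)).iso ((hh i (by omega)).of_iso η.symm)⟩
  · obtain ⟨e⟩ := hH h (by omega)
    exact fun hz => hne (hz.of_iso e)

/-- A finite quasi-projective dimension `n` is realised by a quasi-projective resolution for
which `X_h / B_h` has projective dimension at most `n`, where `h` is the top homological degree. -/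
theorem exists_resolution {M : Type} [AddCommGroup M] [Module R M] (hq : qpd R M ≠ ⊤) :
    ∃ (P : ChainComplex (ModuleCat.{0} R) ℤ) (h : ℤ) (n : ℕ), qpd R M = n ∧ IsQuasiProjRes R P M ∧
      ¬ IsZero (P.homology h) ∧ (∀ i > h, IsZero (P.homology i)) ∧
      PdLT R (P.opcycles h) (n + 1) := by
  have hS : {c : ℕ∞ | ∃ n : ℕ, c = n ∧ ∃ P : ChainComplex (ModuleCat.{0} R) ℤ,
      IsQuasiProjRes R P M ∧
      ∃ h : ℤ, ¬ IsZero (P.homology h) ∧ ∀ i, h + n < i → IsZero (P.X i)}.Nonempty := by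
    by_contra! hemp
    exact hq ((congrArg sInf hemp).trans sInf_empty)
  obtain ⟨n, hn, P, hP, h₀, hne, hX⟩ := csInf_mem hS
  obtain ⟨h, hh, hmax⟩ := Int.exists_greatest_of_bdd (P := fun i => ¬ IsZero (P.homology i))
    ⟨h₀ + n, fun i hi => by
      by_contra! hlt
      exact hi (isZero_homology P (hX i hlt))⟩ ⟨h₀, hne⟩
  have hh' : ∀ i > h, IsZero (P.homology i) := fun i hi => by
    by_contra hz
    exact absurd (hmax i hz) (by omega)
  have := hmax h₀ hne
  exact ⟨P, h, n, hn, hP, hh, hh', pdLT_opcycles hP.1 hh' hX (n + 1) h le_rfl (by push_cast; omega)⟩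

/-- If `X_h / B_h` has projective dimension at most `n` and `H_h ≠ 0`, then `Ext^i(M, R) ≠ 0` for
some `i ≤ n`: otherwise `X_h / B_h` would receive no nonzero map from `M`, although it contains
the homology `H_h ≅ M^a`. -/
theorem exists_not_extVanish [IsNoetherianRing R] {L M : Type} [AddCommGroup L] [Module R L]
    [AddCommGroup M] [Module R M] [Module.Finite R M] {P : ChainComplex (ModuleCat.{0} R) ℤ}
    (hP : IsQuasiProjRes R P M) {e : ℕ}
    (hR : ∀ j < e, ExtVanish R L R j) (hM : ∀ j < e, ExtVanish R L M j) {h : ℤ}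
    (hne : ¬ IsZero (P.homology h)) {n : ℕ} (hpd : PdLT R (P.opcycles h) (n + 1)) :
    ∃ i ≤ n, ¬ ExtVanish R M R i := by
  classical
  by_contra! hall
  have hzero := (hP.stablyFinite hR hM h).hom_eq_zero hpd hall
  obtain ⟨-, -, a, -, ha⟩ := hP
  obtain ⟨η⟩ := ha h
  apply hne
  have : Subsingleton (Fin (a h) → M) := by
    refine subsingleton_of_forall_eq 0 fun v => funext fun k => ?_
    have h1 := LinearMap.congr_fun (hzero ((P.homologyι h).hom ∘ₗ
      η.toLinearEquiv.symm.toLinearMap ∘ₗ LinearMap.single R (fun _ : Fin (a h) => M) k)) (v k)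
    have h2 : η.toLinearEquiv.symm (Pi.single k (v k)) = 0 :=
      homologyι_injective P h (h1.trans (map_zero _).symm)
    have h3 := η.toLinearEquiv.symm.map_eq_zero_iff.1 h2
    exact (Pi.single_eq_same (M := fun _ => M) k (v k)).symm.trans (congrFun h3 k)
  exact (ModuleCat.isZero_of_subsingleton (ModuleCat.of R (Fin (a h) → M))).of_iso η

/-! ### Dimension and depth -/

/-- The dimension of a finite nonzero module over a Noetherian local ring is finite. -/
theorem exists_moduleDim_eq [IsNoetherianRing R] [IsLocalRing R] (M : Type) [AddCommGroup M]
    [Module R M] [Nontrivial M] :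
    ∃ d : ℕ, moduleDim R M = d ∧ Module.supportDim R M < (d + 1 : ℕ) := by
  have : Nonempty (Module.support R M) := Module.nonempty_support_of_nontrivial.to_subtype
  have h1 : Module.supportDim R M = (moduleDim R M : ℕ∞) := Order.krullDim_eq_iSup_length
  have h2 : Module.supportDim R M < ⊤ :=
    (Module.supportDim_le_ringKrullDim R M).trans_lt ringKrullDim_lt_top
  have h3 : moduleDim R M ≠ ⊤ := fun h => by
    rw [h1, h] at h2
    exact lt_irrefl _ h2
  obtain ⟨d, hd⟩ := ENat.ne_top_iff_exists.1 h3
  refine ⟨d, hd.symm, ?_⟩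
  rw [h1, ← hd]
  exact_mod_cast d.lt_succ_self

theorem extVanish_residueField_of_lt_moduleDepth [IsLocalRing R] {M : Type} [AddCommGroup M]
    [Module R M] [Module.Finite R M] [Nontrivial M] [IsNoetherianRing R]
    {j : ℕ} (hj : (j : ℕ∞) < moduleDepth R M) :
    ExtVanish R (IsLocalRing.ResidueField R) M j := by
  obtain ⟨⟨rs, mem, reg⟩, h⟩ := lt_iSup_iff.1 hj
  exact extVanish_residueField_of_isRegular M rs mem reg j (by exact_mod_cast h)

end

/-- A nonzero Cohen–Macaulay module of finite quasi-projective dimension is quasi-perfect: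
`grade(M,R) = qpd_R M`. -/
theorem stmt12 (R : Type) [CommRing R] [IsNoetherianRing R] [IsLocalRing R]
    (M : Type) [AddCommGroup M] [Module R M] [Module.Finite R M] (hM : Nontrivial M)
    (hqpd : qpd R M ≠ ⊤) (hCM : moduleDim R M = moduleDepth R M) :
    extGrade R M R = qpd R M := by
  classical
  obtain ⟨d, hd, hsupp⟩ := exists_moduleDim_eq (R := R) M
  have hkM : ∀ j < d, ExtVanish R (IsLocalRing.ResidueField R) M j := fun j hj =>
    extVanish_residueField_of_lt_moduleDepth (by rw [← hCM, hd]; exact_mod_cast hj)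
  have hgrade : ∀ i, ¬ ExtVanish R M R i → extGrade R M R ≤ i := fun i hi =>
    sInf_le ⟨i, rfl, not_subsingleton_iff_nontrivial.1 (mt (extMod_subsingleton_iff M R i).1 hi)⟩
  obtain ⟨P, h, n, hn, hP, hne, hh, hpd⟩ := exists_resolution hqpd
  obtain ⟨i₀, hi₀, hne₀⟩ := exists_not_extVanish (L := IsLocalRing.ResidueField R) (e := 0) hP
    (by simp) (by simp) hne hpd
  -- If `Ext^j(k, R)` vanished for all `j`, so would `Ext^i(M, R)` for all `i`.
  have hex : ∃ t, ¬ ExtVanish R (IsLocalRing.ResidueField R) R t := by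
    by_contra! hall
    exact hne₀ (ischebeck (d + 1) i₀ M hsupp fun j _ => hall j)
  let t := Nat.find hex
  have htlt : ∀ j < t, ExtVanish R (IsLocalRing.ResidueField R) R j := fun j hj =>
    not_not.1 (Nat.find_min hex hj)
  have hR : ∀ j < min d t, ExtVanish R (IsLocalRing.ResidueField R) R j := fun j hj =>
    htlt j (lt_min_iff.1 hj).2
  have hkM' : ∀ j < min d t, ExtVanish R (IsLocalRing.ResidueField R) M j := fun j hj =>
    hkM j (lt_min_iff.1 hj).1
  have hpd' : PdLT R (P.opcycles h) (t - d + 1) :=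
    ((hP.stablyFinite hR hkM' h).pdLT htlt (Nat.find_spec hex) hpd).mono (by omega)
  have hle : qpd R M ≤ (t - d : ℕ) := qpd_le hP hne hh hpd'
  have hge : ((t - d : ℕ) : ℕ∞) ≤ extGrade R M R := by
    refine le_sInf ?_
    rintro _ ⟨i, rfl, hi⟩
    by_contra! hlt
    have hlt' : i < t - d := by exact_mod_cast hlt
    exact not_subsingleton_iff_nontrivial.2 hi ((extMod_subsingleton_iff M R i).2
      (ischebeck (d + 1) i M hsupp fun j hj => htlt j (by omega)))
  refine le_antisymm ((hgrade i₀ hne₀).trans ?_) (hle.trans hge)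
  rw [hn]
  exact_mod_cast hi₀
end

section
/- Let R be a Noetherian local ring and M, N nonzero finitely generated R-modules with N Cohen–Macaulay, qpd_R M < ∞, and Tor_i^R(M,N) = 0 for all i > 0. Then M ⊗_R N is Cohen–Macaulay if and only if qpd_R M = grade(M,N). -/
/-!
Since `N` is Cohen–Macaulay, `dim (M ⊗ N) + grade (M, N) = dim N` (`QPD.dim_tensor_add_extGrade`),
and the depth formula together with the Auslander–Buchsbaum formula gives
`qpd M + depth (M ⊗ N) = depth N` (`QPD.qpd_add_depth`). As `dim N = depth N` and everything is
finite, `dim (M ⊗ N) = depth (M ⊗ N)` is equivalent to `qpd M = grade (M, N)`.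

The grade identity: let `rs` be a maximal `N`-regular sequence in `ann M`; its length is the grade
`g` by Rees' theorem. The inclusion `Supp (M ⊗ N) ⊆ Supp (N / rs N)` gives `≤`. Conversely
`Hom (M, N / rs N) ≠ 0`, so `N / rs N`, whose depth is at least `depth N - g`, has an associated
prime in `Supp M`, and the depth of `N / rs N` is a lower bound for the length of the longest chain
of primes starting there (`QPD.exists_ltSeries_of_isAssociatedPrime`).

The combined formula is proved directly on a quasi-projective resolution `P` attaining
`n = qpd M`, without assuming that its terms are finitely generated. Write `d = depth N`,
`t = depth (M ⊗ N)`, and let `s` be the top degree with nonzero homology. As `M` is Tor-independent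
of `N`, so are all cycles and boundaries of `P`, hence the sequences `0 → Z → P → B → 0` and
`0 → B → Z → H → 0` stay exact after `⊗ N`. Counting the vanishing of `Ext^j (k, - ⊗ N)` along them,
upwards from the bottom and downwards from the top, gives `d ≤ n + t` (`QPD.d_le`).

If `d < n + t`, the same counting shows that the top differential induces an injection on
`Ext^d (k, - ⊗ N)` (`QPD.exMap_top_injective`). Since `Ext^d (k, N) ≠ 0`, this differential is
injective modulo the maximal ideal (`QPD.mem_of_exMap_injective`). Its cokernel is finitely
generated up to projective summands (`QPD.stabFin_coker`), so the local criterion for flatness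
makes it projective (`QPD.projective_of_stabFin`); then `P` can be truncated one degree lower
(`QPD.exists_trunc`), which contradicts the minimality of `n`.
-/

open CategoryTheory CategoryTheory.Limits Opposite

namespace QPD

/-! ### Long exact sequences and vanishing of Ext -/

section ExtToolkit

open scoped Pointwise

/-- `Ext^j_R(K, A)` in the derived-category model. -/
abbrev EX (R : Type) [CommRing R] (K A : Type) [AddCommGroup K] [Module R K]
    [AddCommGroup A] [Module R A] (j : ℕ) : Type :=
  Abelian.Ext (ModuleCat.of R K) (ModuleCat.of R A) j

variable {R : Type} [CommRing R] {K A B C : Type}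
  [AddCommGroup K] [Module R K] [AddCommGroup A] [Module R A]
  [AddCommGroup B] [Module R B] [AddCommGroup C] [Module R C]

open Abelian

/-- The map `Ext^j(K, A) → Ext^j(K, B)` induced by a linear map `A → B`. -/
noncomputable def exMap (K : Type) [AddCommGroup K] [Module R K] (f : A →ₗ[R] B) (j : ℕ) :
    EX R K A j →+ EX R K B j :=
  (Ext.mk₀ (ModuleCat.ofHom f)).postcomp (ModuleCat.of R K) (add_zero j)

lemma exMap_apply (f : A →ₗ[R] B) (j : ℕ) (x : EX R K A j) :
    exMap K f j x = x.comp (Ext.mk₀ (ModuleCat.ofHom f)) (add_zero j) := rfl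

lemma exMap_comp (g : B →ₗ[R] C) (f : A →ₗ[R] B) (j : ℕ) (x : EX R K A j) :
    exMap K (g ∘ₗ f) j x = exMap K g j (exMap K f j x) := by
  simp only [exMap_apply]
  rw [Ext.comp_assoc_of_third_deg_zero, Ext.mk₀_comp_mk₀]
  rfl

lemma exMap_id (j : ℕ) (x : EX R K A j) : exMap K (LinearMap.id : A →ₗ[R] A) j x = x := by
  rw [exMap_apply]
  exact Ext.comp_mk₀_id x

lemma exMap_add (f g : A →ₗ[R] B) (j : ℕ) (x : EX R K A j) :
    exMap K (f + g) j x = exMap K f j x + exMap K g j x := by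
  simp only [exMap_apply]
  rw [ModuleCat.ofHom_add, Ext.mk₀_add, Ext.comp_add]

lemma exMap_zero (j : ℕ) (x : EX R K A j) :
    exMap K (0 : A →ₗ[R] B) j x = 0 := by
  simp only [exMap_apply]
  rw [ModuleCat.ofHom_zero, Ext.mk₀_zero, Ext.comp_zero]

lemma exMap_sum {ι : Type} (s : Finset ι) (f : ι → A →ₗ[R] B) (j : ℕ) (x : EX R K A j) :
    exMap K (∑ i ∈ s, f i) j x = ∑ i ∈ s, exMap K (f i) j x := by
  classical
  induction s using Finset.induction_on with
  | empty => simp [exMap_zero]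
  | insert a s ha ih => rw [Finset.sum_insert ha, Finset.sum_insert ha, exMap_add, ih]

lemma exMap_smul (r : R) (f : A →ₗ[R] B) (j : ℕ) (x : EX R K A j) :
    exMap K (r • f) j x = r • exMap K f j x := by
  simp only [exMap_apply]
  rw [show ModuleCat.ofHom (r • f) = r • ModuleCat.ofHom f from rfl, Ext.mk₀_smul, Ext.comp_smul]

/-- Elements killing `K` kill `Ext^j(K, A)`. -/
lemma smul_ex_eq_zero {r : R} (hr : r ∈ Module.annihilator R K) (j : ℕ) (x : EX R K A j) :
    r • x = 0 := by
  rw [Ext.smul_eq_comp_mk₀]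
  have := Ext.postcomp_smul_id_eq_zero_of_mem_annihilator (N := ModuleCat.of R K)
    (M := ModuleCat.of R A) hr j
  have h2 := ConcreteCategory.congr_hom this x
  exact h2

lemma shortExact_of {f : A →ₗ[R] B} {g : B →ₗ[R] C} (hf : Function.Injective f)
    (hg : Function.Surjective g) (h : Function.Exact f g) :
    (ShortComplex.mk (ModuleCat.ofHom f) (ModuleCat.ofHom g)
      (by ext x; exact h.apply_apply_eq_zero x)).ShortExact where
  exact := by
    rw [ShortComplex.ShortExact.moduleCat_exact_iff_function_exact]
    exact h
  mono_f := by
    rw [ModuleCat.mono_iff_injective]; exact hf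
  epi_g := by
    rw [ModuleCat.epi_iff_surjective]; exact hg

section les
variable {f : A →ₗ[R] B} {g : B →ₗ[R] C} (hf : Function.Injective f)
    (hg : Function.Surjective g) (h : Function.Exact f g)
include hf hg h

/-- `Ext^j(K, B) = 0` and `Ext^{j+1}(K, A) = 0` force `Ext^j(K, C) = 0`. -/
lemma ex_right_of (j : ℕ) (hB : Subsingleton (EX R K B j)) (hA : Subsingleton (EX R K A (j+1))) :
    Subsingleton (EX R K C j) := by
  refine subsingleton_of_forall_eq 0 fun x => ?_
  obtain ⟨y, rfl⟩ := Ext.covariant_sequence_exact₃ (ModuleCat.of R K) (shortExact_of hf hg h) x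
    (n₁ := j + 1) rfl (hA.elim _ _)
  rw [show y = 0 from hB.elim _ _, Ext.zero_comp]

/-- `Ext^j(K, C) = 0` and `Ext^{j+1}(K, B) = 0` force `Ext^{j+1}(K, A) = 0`. -/
lemma ex_left_of (j : ℕ) (hC : Subsingleton (EX R K C j)) (hB : Subsingleton (EX R K B (j+1))) :
    Subsingleton (EX R K A (j+1)) := by
  refine subsingleton_of_forall_eq 0 fun x => ?_
  obtain ⟨y, rfl⟩ := Ext.covariant_sequence_exact₁ (ModuleCat.of R K) (shortExact_of hf hg h) x
    (hB.elim _ _) (n₀ := j) rfl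
  rw [show y = 0 from hC.elim _ _, Ext.zero_comp]

lemma ex_mid_of (j : ℕ) (hA : Subsingleton (EX R K A j)) (hC : Subsingleton (EX R K C j)) :
    Subsingleton (EX R K B j) := by
  refine subsingleton_of_forall_eq 0 fun x => ?_
  obtain ⟨y, rfl⟩ := Ext.covariant_sequence_exact₂ (ModuleCat.of R K) (shortExact_of hf hg h) x
    (hC.elim _ _)
  rw [show y = 0 from hA.elim _ _, Ext.zero_comp]

/-- `Ext^{j+1}(K, A) → Ext^{j+1}(K, B)` is injective if `Ext^j(K, C) = 0`. -/
lemma exMap_injective_of (j : ℕ) (hC : Subsingleton (EX R K C j)) :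
    Function.Injective (exMap K f (j+1)) := by
  rw [injective_iff_map_eq_zero]
  intro x hx
  obtain ⟨y, rfl⟩ := Ext.covariant_sequence_exact₁ (ModuleCat.of R K) (shortExact_of hf hg h) x
    hx (n₀ := j) rfl
  rw [show y = 0 from hC.elim _ _, Ext.zero_comp]

/-- `Ext^j(K, B) → Ext^j(K, C)` is injective if `Ext^j(K, A) = 0`. -/
lemma exMap_injective_mid (j : ℕ) (hA : Subsingleton (EX R K A j)) :
    Function.Injective (exMap K g j) := by
  rw [injective_iff_map_eq_zero]
  intro x hx
  obtain ⟨y, rfl⟩ := Ext.covariant_sequence_exact₂ (ModuleCat.of R K) (shortExact_of hf hg h) x hx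
  rw [show y = 0 from hA.elim _ _, Ext.zero_comp]

end les

lemma exMap_injective_zero {f : A →ₗ[R] B} (hf : Function.Injective f) :
    Function.Injective (exMap K f 0) := by
  have : Mono (ModuleCat.ofHom f) := by
    rw [ModuleCat.mono_iff_injective]; exact hf
  exact Ext.postcomp_mk₀_injective_of_mono (ModuleCat.of R K) (ModuleCat.ofHom f)

lemma ex_zero_of_injective {f : A →ₗ[R] B} (hf : Function.Injective f)
    (hB : Subsingleton (EX R K B 0)) : Subsingleton (EX R K A 0) :=
  (exMap_injective_zero hf).subsingleton

lemma ex_of_subsingleton [Subsingleton A] (j : ℕ) : Subsingleton (EX R K A j) := by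
  refine subsingleton_of_forall_eq 0 fun x => ?_
  rw [← exMap_id j x, show (LinearMap.id : A →ₗ[R] A) = 0 from by ext; exact Subsingleton.elim _ _,
    exMap_zero]

lemma ex_of_equiv (e : A ≃ₗ[R] B) (j : ℕ) (hA : Subsingleton (EX R K A j)) :
    Subsingleton (EX R K B j) := by
  refine subsingleton_of_forall_eq 0 fun x => ?_
  rw [← exMap_id j x, show (LinearMap.id : B →ₗ[R] B) = e.toLinearMap ∘ₗ e.symm.toLinearMap from
    by ext; simp, exMap_comp, show exMap K e.symm.toLinearMap j x = 0 from hA.elim _ _, map_zero]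

/-- A finite sum of maps through `A` that equals the identity of `B` transports the vanishing of
`Ext` from `A` to `B`; this covers finite powers, retracts and isomorphisms. -/
lemma ex_of_sum {ι : Type} (s : Finset ι) (u : ι → A →ₗ[R] B) (v : ι → B →ₗ[R] A)
    (huv : ∑ i ∈ s, u i ∘ₗ v i = LinearMap.id) (j : ℕ) (hA : Subsingleton (EX R K A j)) :
    Subsingleton (EX R K B j) := by
  refine subsingleton_of_forall_eq 0 fun x => ?_
  rw [← exMap_id j x, ← huv, exMap_sum]
  refine Finset.sum_eq_zero fun i _ => ?_
  rw [exMap_comp, show exMap K (v i) j x = 0 from hA.elim _ _, map_zero]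

lemma ex_zero_subsingleton_iff : Subsingleton (EX R K A 0) ↔ Subsingleton (K →ₗ[R] A) :=
  (Ext.addEquiv₀.trans ModuleCat.homAddEquiv).subsingleton_congr

/-- If `rs` is weakly `A`-regular and kills `K`, then `Ext^j(K, A) = 0` for `j < |rs|`. -/
lemma ex_subsingleton_of_isWeaklyRegular (rs : List R) :
    ∀ (A : Type) [AddCommGroup A] [Module R A],
    (∀ r ∈ rs, r ∈ Module.annihilator R K) → RingTheory.Sequence.IsWeaklyRegular A rs →
    ∀ j < rs.length, Subsingleton (EX R K A j) := by
  induction rs with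
  | nil => intro A _ _ _ _ j hj; simp at hj
  | cons a rs ih =>
    intro A _ _ hmem hreg j hj
    rw [RingTheory.Sequence.isWeaklyRegular_cons_iff] at hreg
    simp only [List.mem_cons, forall_eq_or_imp] at hmem
    simp only [List.length_cons] at hj
    have hmul : exMap K (LinearMap.lsmul R A a) j = 0 := by
      ext x
      rw [show LinearMap.lsmul R A a = a • LinearMap.id from by ext; simp, exMap_smul, exMap_id]
      exact smul_ex_eq_zero hmem.1 j x
    have hinj : Function.Injective (exMap K (LinearMap.lsmul R A a) j) := by
      rcases j with _ | j
      · exact exMap_injective_zero hreg.1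
      · refine exMap_injective_of (f := LinearMap.lsmul R A a)
          (g := (a • (⊤ : Submodule R A)).mkQ) hreg.1
          (Submodule.mkQ_surjective _) ?_ j (ih _ hmem.2 hreg.2 j (by omega))
        rw [LinearMap.exact_iff, Submodule.ker_mkQ]
        ext y
        simp [Submodule.mem_smul_pointwise_iff_exists]
    refine ⟨fun x y => hinj ?_⟩
    rw [hmul]; rfl

end ExtToolkit

/-! ### Comparison of the two models of Ext -/

section ExtCompare

open Abelian
variable {R : Type} [CommRing R] {M N : Type}
  [AddCommGroup M] [Module R M] [AddCommGroup N] [Module R N]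

/-- The two models of `Ext` vanish simultaneously: both are computed by cocycles on one projective
resolution. -/
lemma subsingleton_extMod_iff (i : ℕ) :
    Subsingleton (extMod R M N i) ↔ Subsingleton (EX R M N i) := by
  let P := projectiveResolution (ModuleCat.of R M)
  have h1 : Subsingleton (extMod R M N i) ↔
      (P.complex.linearYonedaObj R (ModuleCat.of R N)).ExactAt i := by
    rw [HomologicalComplex.exactAt_iff_isZero_homology,
      ← (P.isoExt (R := R) i (ModuleCat.of R N)).isZero_iff, ModuleCat.isZero_iff_subsingleton]
    rfl
  rw [h1]
  rcases i with _ | i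
  · rw [HomologicalComplex.exactAt_iff' _ 0 0 1 (by simp) (by simp),
      ShortComplex.moduleCat_exact_iff, (Ext.addEquiv₀).subsingleton_congr]
    have hd : P.complex.d 0 0 = 0 := HomologicalComplex.shape _ _ _ (by simp)
    obtain ⟨ε, hε⟩ : ∃ ε : P.complex.X 0 ⟶ ModuleCat.of R M, ε = P.π.f 0 := ⟨P.π.f 0, rfl⟩
    have hw : P.complex.d 1 0 ≫ ε = 0 := by rw [hε]; exact P.complex_d_comp_π_f_zero
    have hexact : (ShortComplex.mk _ ε hw).Exact := by subst hε; exact P.exact₀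
    have hepi : Epi ε := by subst hε; exact inferInstanceAs (Epi (P.π.f 0))
    constructor
    · intro h
      refine subsingleton_of_forall_eq 0 fun x => ?_
      obtain ⟨y, hy⟩ := h (ε ≫ x)
        (by
          change P.complex.d 1 0 ≫ _ = 0
          rw [← Category.assoc, hw, zero_comp])
      have hy' : P.complex.d 0 0 ≫ (show P.complex.X 0 ⟶ ModuleCat.of R N from y) = ε ≫ x := hy
      rw [hd, zero_comp] at hy'
      rw [← cancel_epi ε, ← hy', comp_zero]
    · intro h x hx
      refine ⟨0, ?_⟩
      rw [map_zero]
      have hx' : P.complex.d 1 0 ≫ (show P.complex.X 0 ⟶ ModuleCat.of R N from x) = 0 := hx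
      obtain ⟨l, hl⟩ := hexact.desc' _ hx'
      have h0 : (show P.complex.X 0 ⟶ ModuleCat.of R N from x) = 0 := by
        rw [← hl, show l = 0 from h.elim _ _, comp_zero]
      exact h0.symm
  · rw [HomologicalComplex.exactAt_iff' _ i (i+1) (i+2) (by simp) (by simp),
      ShortComplex.moduleCat_exact_iff]
    constructor
    · intro h
      refine subsingleton_of_forall_eq 0 fun x => ?_
      obtain ⟨f, hf, rfl⟩ := P.extMk_surjective x (i+2) rfl
      rw [P.extMk_eq_zero_iff f _ _ hf i rfl]
      obtain ⟨g, hg⟩ := h f hf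
      exact ⟨g, hg⟩
    · intro h f hf
      have := h.elim (P.extMk f (i+2) rfl hf) 0
      rw [P.extMk_eq_zero_iff f _ _ hf i rfl] at this
      obtain ⟨g, hg⟩ := this
      exact ⟨g, hg⟩

end ExtCompare

/-! ### Dimension, depth and Ext -/

section Depth

set_option linter.unusedSectionVars false

open IsLocalRing
variable {R : Type} [CommRing R] [IsNoetherianRing R] [IsLocalRing R]
  {A : Type} [AddCommGroup A] [Module R A]

lemma coe_moduleDim [Nontrivial A] : ((moduleDim R A : ℕ∞) : WithBot ℕ∞) = Module.supportDim R A := by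
  have : Nonempty (Module.support R A) := (Module.nonempty_support_of_nontrivial).to_subtype
  rw [Module.supportDim, Order.krullDim_eq_iSup_length]
  rfl

lemma moduleDim_ne_top [Nontrivial A] : moduleDim R A ≠ ⊤ := by
  intro h
  have h1 := Module.supportDim_le_ringKrullDim R A
  rw [← coe_moduleDim, h] at h1
  exact absurd (lt_of_le_of_lt h1 ringKrullDim_lt_top) (by simp)

variable [Module.Finite R A] [Nontrivial A]

lemma smul_top_lt {I : Ideal R} (hI : I ≤ maximalIdeal R) : I • (⊤ : Submodule R A) < ⊤ := by
  rw [lt_top_iff_ne_top, ne_comm]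
  apply Submodule.top_ne_ideal_smul_of_le_jacobson_annihilator
  exact hI.trans (IsLocalRing.maximalIdeal_le_jacobson _)

lemma isRegular_of_isWeaklyRegular {rs : List R} (hm : ∀ r ∈ rs, r ∈ maximalIdeal R)
    (h : RingTheory.Sequence.IsWeaklyRegular A rs) : RingTheory.Sequence.IsRegular A rs :=
  ⟨h, (smul_top_lt (Ideal.span_le.mpr hm)).ne'⟩

/-- Killing a regular sequence drops the dimension by its length. -/
lemma dim_quot_add {rs : List R} (h : RingTheory.Sequence.IsRegular A rs) :
    moduleDim R (A ⧸ (Ideal.ofList rs • ⊤ : Submodule R A)) + rs.length = moduleDim R A := by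
  have : Nontrivial (A ⧸ (Ideal.ofList rs • ⊤ : Submodule R A)) :=
    Submodule.Quotient.nontrivial_iff.mpr h.2.symm
  have := Module.supportDim_add_length_eq_supportDim_of_isRegular rs h
  rw [← coe_moduleDim, ← coe_moduleDim] at this
  exact_mod_cast this

/-- Rees: for `K` with support `V(I)`, the maximal length `d` of an `A`-regular sequence in `I` is
attained and is the least degree in which `Ext^d(K, A) ≠ 0`. -/
lemma exists_idealDepth {K : Type} [AddCommGroup K] [Module R K] [Module.Finite R K] [Nontrivial K]
    {I : Ideal R} (hI : I ≤ maximalIdeal R) (hK : Module.support R K = PrimeSpectrum.zeroLocus I) :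
    ∃ d : ℕ, idealDepth R I A = d ∧ (∀ i < d, Subsingleton (EX R K A i)) ∧
      ¬ Subsingleton (EX R K A d) ∧
      (∃ rs : List R, rs.length = d ∧ (∀ r ∈ rs, r ∈ I) ∧ RingTheory.Sequence.IsRegular A rs) ∧
      (∀ rs : List R, (∀ r ∈ rs, r ∈ I) → RingTheory.Sequence.IsRegular A rs → rs.length ≤ d) := by
  classical
  let S : Set ℕ := {n | ∃ rs : List R, rs.length = n ∧ (∀ r ∈ rs, r ∈ I) ∧
    RingTheory.Sequence.IsRegular A rs}
  obtain ⟨D, hD⟩ := ENat.ne_top_iff_exists.mp (moduleDim_ne_top (R := R) (A := A))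
  have hbdd : ∀ n ∈ S, n ≤ D := by
    rintro n ⟨rs, rfl, -, hrs⟩
    have := dim_quot_add hrs
    rw [← hD] at this
    have h2 : (rs.length : ℕ∞) ≤ D := this ▸ le_add_self
    exact_mod_cast h2
  have hne : S.Nonempty := ⟨0, [], rfl, by simp, RingTheory.Sequence.IsRegular.nil R A⟩
  have hB : BddAbove S := ⟨D, hbdd⟩
  have hmem : sSup S ∈ S := Nat.sSup_mem hne hB
  have hle : ∀ n ∈ S, n ≤ sSup S := fun n hn => le_csSup hB hn
  have key : ∀ n, n ∈ S ↔ ∀ i < n, Subsingleton (EX R K A i) := by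
    intro n
    constructor
    · rintro ⟨rs, rfl, h1, h2⟩
      exact ModuleCat.subsingleton_ext_of_exists_isRegular I (ModuleCat.of R K) hK.subset
        (ModuleCat.of R A) (smul_top_lt hI) rs h1 h2
    · intro h
      exact ModuleCat.exists_isRegular_of_exists_subsingleton_ext I n (ModuleCat.of R A)
        (smul_top_lt hI) (ModuleCat.of R K) hK h
  refine ⟨sSup S, ?_, (key _).mp hmem, ?_, hmem, fun rs h1 h2 => hle _ ⟨rs, rfl, h1, h2⟩⟩
  · apply le_antisymm
    · refine iSup_le fun rs => ?_
      exact_mod_cast hle _ ⟨rs.1, rfl, rs.2.1, rs.2.2⟩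
    · obtain ⟨rs, h0, h1, h2⟩ := hmem
      rw [← h0]
      exact le_iSup (fun rs : {l : List R // (∀ r ∈ l, r ∈ I) ∧
        RingTheory.Sequence.IsRegular A l} => (rs.1.length : ℕ∞)) ⟨rs, h1, h2⟩
  · intro h
    have : sSup S + 1 ∈ S := (key _).mpr fun i hi => by
      rcases Nat.lt_succ_iff_lt_or_eq.mp hi with hi | rfl
      · exact (key _).mp hmem i hi
      · exact h
    have := hle _ this
    omega

lemma support_residueField :
    Module.support R (ResidueField R) = PrimeSpectrum.zeroLocus (maximalIdeal R : Set R) := by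
  have : Module.Finite R (ResidueField R) := inferInstanceAs (Module.Finite R (R ⧸ maximalIdeal R))
  rw [Module.support_eq_zeroLocus]
  congr 2
  exact Ideal.annihilator_quotient (I := maximalIdeal R)

/-- The depth is the least `d` with `Ext^d(k, A) ≠ 0`, for `k` the residue field. -/
lemma exists_moduleDepth :
    ∃ d : ℕ, moduleDepth R A = d ∧ (∀ i < d, Subsingleton (EX R (ResidueField R) A i)) ∧
      ¬ Subsingleton (EX R (ResidueField R) A d) ∧
      (∃ rs : List R, rs.length = d ∧ (∀ r ∈ rs, r ∈ maximalIdeal R) ∧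
        RingTheory.Sequence.IsRegular A rs) ∧
      (∀ rs : List R, (∀ r ∈ rs, r ∈ maximalIdeal R) → RingTheory.Sequence.IsRegular A rs →
        rs.length ≤ d) := by
  have : Module.Finite R (ResidueField R) := inferInstanceAs (Module.Finite R (R ⧸ maximalIdeal R))
  exact exists_idealDepth le_rfl support_residueField

/-- Killing a regular sequence shortens the initial range of vanishing Ext modules by at most its
length. -/
lemma ex_quot_of {K : Type} [AddCommGroup K] [Module R K] (rs : List R) :
    ∀ (A : Type) [AddCommGroup A] [Module R A], RingTheory.Sequence.IsWeaklyRegular A rs →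
    ∀ d, (∀ i < d, Subsingleton (EX R K A i)) →
    ∀ i, i + rs.length < d →
      Subsingleton (EX R K (A ⧸ (Ideal.ofList rs • ⊤ : Submodule R A)) i) := by
  induction rs with
  | nil =>
    intro A _ _ _ d h i hi
    refine ex_of_equiv (Submodule.quotEquivOfEqBot _ ?_).symm i (h i (by simpa using hi))
    simp
  | cons a rs ih =>
    intro A _ _ hreg d h i hi
    rw [RingTheory.Sequence.isWeaklyRegular_cons_iff] at hreg
    simp only [List.length_cons] at hi
    refine ex_of_equiv (Submodule.quotOfListConsSMulTopEquivQuotSMulTopInner A a rs).symm i ?_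
    refine ih _ hreg.2 (d-1) (fun j hj => ?_) i (by omega)
    refine ex_right_of (f := LinearMap.lsmul R A a) (B := A) (A := A)
      (g := Submodule.mkQ _) hreg.1
      (Submodule.mkQ_surjective _) ?_ j (h j (by omega)) (h (j+1) (by omega))
    rw [LinearMap.exact_iff, Submodule.ker_mkQ]
    ext y
    simp [Submodule.mem_smul_pointwise_iff_exists]

end Depth

/-! ### Dimension of the tensor product and the grade -/

section Chains
open IsLocalRing TensorProduct Pointwise
variable {R : Type} [CommRing R] [IsNoetherianRing R] [IsLocalRing R]

/-- `depth A ≤ dim R/p` for every associated prime `p` of `A`: a weakly regular sequence on `A`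
yields a chain of primes of the same length starting at `p`. -/
lemma exists_ltSeries_of_isAssociatedPrime (rs : List R) (hm : ∀ r ∈ rs, r ∈ maximalIdeal R) :
    ∀ (A : Type) [AddCommGroup A] [Module R A] [Module.Finite R A],
    RingTheory.Sequence.IsWeaklyRegular A rs → ∀ p : PrimeSpectrum R,
    IsAssociatedPrime p.asIdeal A →
    ∃ c : LTSeries (PrimeSpectrum R), c.head = p ∧ c.length = rs.length := by
  induction rs with
  | nil => intro A _ _ _ _ p hp; exact ⟨RelSeries.singleton _ p, rfl, rfl⟩
  | cons x rs ih =>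
    intro A _ _ _ hreg p hp
    rw [RingTheory.Sequence.isWeaklyRegular_cons_iff] at hreg
    simp only [List.mem_cons, forall_eq_or_imp] at hm
    let U : Submodule R A :=
      { carrier := {u | ∀ r ∈ p.asIdeal, r • u = 0}
        add_mem' := fun {a b} ha hb r hr => by rw [smul_add, ha r hr, hb r hr, add_zero]
        zero_mem' := fun r _ => smul_zero r
        smul_mem' := fun c u hu r hr => by rw [smul_comm, hu r hr, smul_zero] }
    obtain ⟨-, a, ha⟩ := isAssociatedPrime_iff.mp hp
    have hmemp : ∀ r, r ∈ p.asIdeal ↔ r • a = 0 := by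
      intro r
      rw [ha, Submodule.mem_colon_singleton, Submodule.mem_bot]
    have ha0 : a ≠ 0 := by
      rintro rfl
      exact p.isPrime.ne_top ((Ideal.eq_top_iff_one _).mpr ((hmemp 1).mpr (smul_zero _)))
    have haU : a ∈ U := fun r hr => (hmemp r).mp hr
    have hxp : x ∉ p.asIdeal := fun h => ha0 (hreg.1 (by simpa using (hmemp x).mp h))
    -- `U ⊄ xA`: otherwise `U = xU`, so `U = 0` by Nakayama
    have hU : ∃ u ∈ U, u ∉ x • (⊤ : Submodule R A) := by
      by_contra! hcon
      have hle : U ≤ maximalIdeal R • U := by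
        intro u hu
        obtain ⟨v, -, rfl⟩ := (Submodule.mem_smul_pointwise_iff_exists _ _ _).mp (hcon u hu)
        refine Submodule.smul_mem_smul hm.1 fun r hr => hreg.1 ?_
        have := hu r hr
        simpa [smul_comm x r v] using this
      have hbot := Submodule.eq_bot_of_le_smul_of_le_jacobson_bot (maximalIdeal R) U
        (IsNoetherian.noetherian U) hle (IsLocalRing.maximalIdeal_le_jacobson _)
      exact ha0 ((Submodule.mem_bot R).mp (hbot ▸ haU))
    obtain ⟨u, huU, hux⟩ := hU
    obtain ⟨q, hq, hle⟩ := exists_le_isAssociatedPrime_of_isNoetherianRing (R := R)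
      (M := QuotSMulTop x A) (Submodule.Quotient.mk u)
      (by rwa [ne_eq, Submodule.Quotient.mk_eq_zero])
    have hq' := hq.isPrime
    have hpq : p < ⟨q, hq'⟩ := by
      refine lt_of_le_of_ne ?_ ?_
      · intro r hr
        refine hle ?_
        rw [Submodule.mem_colon_singleton, Submodule.mem_bot, ← Submodule.Quotient.mk_smul,
          huU r hr, Submodule.Quotient.mk_zero]
      · intro h
        apply hxp
        rw [h]
        refine hle ?_
        rw [Submodule.mem_colon_singleton, Submodule.mem_bot, ← Submodule.Quotient.mk_smul,
          Submodule.Quotient.mk_eq_zero]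
        exact Submodule.smul_mem_pointwise_smul _ _ _ trivial
    obtain ⟨c, hc, hl⟩ := ih hm.2 (QuotSMulTop x A) hreg.2 ⟨q, hq'⟩ hq
    exact ⟨c.cons p (by rw [hc]; exact hpq), by simp, by simp [hl]⟩

omit [IsNoetherianRing R] [IsLocalRing R] in
lemma support_tensor_eq {M N : Type} [AddCommGroup M] [Module R M] [AddCommGroup N] [Module R N]
    [Module.Finite R M] [Module.Finite R N] :
    Module.support R (M ⊗[R] N) = Module.support R M ∩ Module.support R N := by
  ext p
  rw [Set.mem_inter_iff, Module.mem_support_iff_nontrivial_residueField_tensorProduct,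
    Module.mem_support_iff_nontrivial_residueField_tensorProduct,
    Module.mem_support_iff_nontrivial_residueField_tensorProduct,
    (AlgebraTensorModule.distribBaseChange R p.asIdeal.ResidueField M N).toEquiv.nontrivial_congr]
  constructor
  · intro h
    constructor
    · by_contra h'
      rw [not_nontrivial_iff_subsingleton] at h'
      exact not_subsingleton _ (inferInstance : Subsingleton ((p.asIdeal.ResidueField ⊗[R] M)
        ⊗[p.asIdeal.ResidueField] (p.asIdeal.ResidueField ⊗[R] N)))
    · by_contra h'
      rw [not_nontrivial_iff_subsingleton] at h'
      exact not_subsingleton _ (inferInstance : Subsingleton ((p.asIdeal.ResidueField ⊗[R] M)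
        ⊗[p.asIdeal.ResidueField] (p.asIdeal.ResidueField ⊗[R] N)))
  · rintro ⟨h1, h2⟩
    infer_instance

variable {M N : Type} [AddCommGroup M] [Module R M] [AddCommGroup N] [Module R N]
    [Module.Finite R M] [Module.Finite R N] [Nontrivial M] [Nontrivial N]

omit [IsNoetherianRing R] in
lemma nontrivial_tensor : Nontrivial (M ⊗[R] N) := by
  rw [← Module.nonempty_support_iff (R := R), support_tensor_eq]
  exact ⟨closedPoint R, closedPoint_mem_support R M, closedPoint_mem_support R N⟩

/-- For `N` Cohen–Macaulay, `dim (M ⊗ N) + grade (M, N) = dim N`. -/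
lemma dim_tensor_add_extGrade (hCM : moduleDim R N = moduleDepth R N) :
    moduleDim R (M ⊗[R] N) + extGrade R M N = moduleDim R N := by
  have hI : Module.annihilator R M ≤ maximalIdeal R := by
    refine IsLocalRing.le_maximalIdeal fun h => ?_
    rw [Module.annihilator_eq_top_iff] at h
    exact not_subsingleton M h
  obtain ⟨g, -, hlt, hg, ⟨rs, hlen, hmem, hreg⟩, hmax⟩ := exists_idealDepth (K := M) (A := N) hI
    Module.support_eq_zeroLocus
  have hgrade : extGrade R M N = g := by
    apply le_antisymm
    · refine sInf_le ⟨g, rfl, ?_⟩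
      rwa [← not_subsingleton_iff_nontrivial, subsingleton_extMod_iff]
    · refine le_sInf ?_
      rintro _ ⟨i, rfl, hi⟩
      rw [← not_subsingleton_iff_nontrivial, subsingleton_extMod_iff] at hi
      have : g ≤ i := by
        by_contra! h
        exact hi (hlt i h)
      exact_mod_cast this
  rw [hgrade]
  have hT := nontrivial_tensor (R := R) (M := M) (N := N)
  have hdq := dim_quot_add hreg
  have hofl : Ideal.ofList rs ≤ Module.annihilator R M := Ideal.span_le.mpr hmem
  have : Nontrivial (N ⧸ (Ideal.ofList rs • ⊤ : Submodule R N)) :=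
    Submodule.Quotient.nontrivial_iff.mpr hreg.2.symm
  apply le_antisymm
  · rw [← hdq, hlen]
    refine add_le_add_left ?_ _
    rw [← WithBot.coe_le_coe, coe_moduleDim, coe_moduleDim]
    unfold Module.supportDim
    have hsub : Module.support R (M ⊗[R] N) ⊆
        Module.support R (N ⧸ (Ideal.ofList rs • ⊤ : Submodule R N)) := by
      rw [support_tensor_eq, Module.support_quotient, Module.support_eq_zeroLocus (M := M)]
      intro p hp
      exact ⟨hp.2, PrimeSpectrum.zeroLocus_anti_mono hofl hp.1⟩
    exact Order.krullDim_le_of_strictMono (Set.inclusion hsub) (fun a b h => h)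
  · obtain ⟨d, hd, hdlt, -, -, -⟩ := exists_moduleDepth (R := R) (A := N)
    -- by maximality of `rs` there is a nonzero map from `M` to `N / rs N`
    have hHom : ¬ Subsingleton (M →ₗ[R] (N ⧸ (Ideal.ofList rs • ⊤ : Submodule R N))) := by
      rw [IsSMulRegular.subsingleton_linearMap_iff]
      rintro ⟨r, hr, hr'⟩
      have := hmax (rs ++ [r]) (by
        intro s hs
        rcases List.mem_append.mp hs with hs | hs
        · exact hmem s hs
        · rw [List.mem_singleton.mp hs]; exact hr)
        (isRegular_of_isWeaklyRegular (fun s hs => hI (by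
            rcases List.mem_append.mp hs with hs | hs
            · exact hmem s hs
            · rw [List.mem_singleton.mp hs]; exact hr))
          ((RingTheory.Sequence.isWeaklyRegular_append_iff _ _ _).mpr
            ⟨hreg.1, (RingTheory.Sequence.isWeaklyRegular_singleton_iff _ _).mpr hr'⟩))
      simp [hlen] at this
    rw [not_subsingleton_iff_nontrivial] at hHom
    obtain ⟨f, hf⟩ := exists_ne (0 : M →ₗ[R] (N ⧸ (Ideal.ofList rs • ⊤ : Submodule R N)))
    obtain ⟨m, hfm⟩ : ∃ m, f m ≠ 0 := by
      by_contra! h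
      exact hf (LinearMap.ext h)
    obtain ⟨p, hp, hle⟩ := exists_le_isAssociatedPrime_of_isNoetherianRing (R := R) (f m) hfm
    have hpp := hp.isPrime
    have hMp : Module.annihilator R M ≤ p := by
      intro r hr
      refine hle ?_
      rw [Submodule.mem_colon_singleton, Submodule.mem_bot, ← map_smul,
        Module.mem_annihilator.mp hr, map_zero]
    have hNp : Module.annihilator R N ≤ p := by
      intro r hr
      refine hle ?_
      rw [Submodule.mem_colon_singleton, Submodule.mem_bot]
      obtain ⟨n, hn⟩ := Submodule.Quotient.mk_surjective _ (f m)
      rw [← hn, ← Submodule.Quotient.mk_smul, Module.mem_annihilator.mp hr,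
        Submodule.Quotient.mk_zero]
    obtain ⟨d', hd', -, hd'n, ⟨ss, hsl, hsm, hsr⟩, -⟩ := exists_moduleDepth (R := R)
      (A := N ⧸ (Ideal.ofList rs • ⊤ : Submodule R N))
    have hdd' : d ≤ d' + g := by
      by_contra! hlt
      exact hd'n (ex_quot_of rs N hreg.1 d hdlt d' (by omega))
    obtain ⟨c, hc, hcl⟩ := exists_ltSeries_of_isAssociatedPrime ss hsm _ hsr.1 ⟨p, hpp⟩ hp
    have hcs : ∀ i, c i ∈ Module.support R (M ⊗[R] N) := by
      intro i
      have hci : (⟨p, hpp⟩ : PrimeSpectrum R) ≤ c i := by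
        rw [← hc]; exact LTSeries.head_le c i
      rw [support_tensor_eq]
      exact ⟨Module.mem_support_mono hci (Module.mem_support_iff_of_finite.mpr hMp),
        Module.mem_support_mono hci (Module.mem_support_iff_of_finite.mpr hNp)⟩
    let c' : LTSeries (Module.support R (M ⊗[R] N)) :=
      { length := c.length, toFun := fun i => ⟨c i, hcs i⟩, step := fun i => c.step i }
    have h1 : (c'.length : ℕ∞) ≤ moduleDim R (M ⊗[R] N) :=
      le_iSup (fun c : LTSeries (Module.support R (M ⊗[R] N)) => (c.length : ℕ∞)) c'
    rw [hCM, hd]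
    calc (d : ℕ∞) ≤ (d' + g : ℕ) := by exact_mod_cast hdd'
      _ = (c'.length : ℕ∞) + g := by
        rw [show c'.length = d' from hcl.trans hsl]; push_cast; rfl
      _ ≤ _ := add_le_add_left h1 _

end Chains

/-! ### Tor-independent modules -/

section TorAcyclic
open TensorProduct

variable {R : Type} [CommRing R] {N : Type} [AddCommGroup N] [Module R N]

/-- `A` is Tor-independent of `N`: tensoring the projective resolution `Q` of `N` with `A` leaves
it exact in positive degrees. -/
def TorAcyc (Q : ProjectiveResolution (ModuleCat.of R N)) (A : Type) [AddCommGroup A]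
    [Module R A] : Prop :=
  ∀ i : ℕ, Function.Exact ((Q.complex.d (i+2) (i+1)).hom.lTensor A)
    ((Q.complex.d (i+1) i).hom.lTensor A)

variable (Q : ProjectiveResolution (ModuleCat.of R N))
variable {A B C : Type} [AddCommGroup A] [Module R A]
  [AddCommGroup B] [Module R B] [AddCommGroup C] [Module R C]

lemma flat_res (i : ℕ) : Module.Flat R (Q.complex.X i) := by
  have : Projective (Q.complex.X i) := Q.projective i
  have : Module.Projective R (Q.complex.X i) :=
    (IsProjective.iff_projective (R := R) (Q.complex.X i)).mpr this
  infer_instance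

lemma lTensor_d_d (A : Type) [AddCommGroup A] [Module R A] (i : ℕ) (x : A ⊗[R] Q.complex.X (i+2)) :
    (Q.complex.d (i+1) i).hom.lTensor A ((Q.complex.d (i+2) (i+1)).hom.lTensor A x) = 0 := by
  rw [← LinearMap.comp_apply, ← LinearMap.lTensor_comp, ← ModuleCat.hom_comp,
    HomologicalComplex.d_comp_d]
  simp

lemma comm_tensor (f : A →ₗ[R] B) {X Y : Type} [AddCommGroup X] [Module R X] [AddCommGroup Y]
    [Module R Y] (d : X →ₗ[R] Y) (x : A ⊗[R] X) :
    d.lTensor B (f.rTensor X x) = f.rTensor Y (d.lTensor A x) := by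
  rw [← LinearMap.comp_apply, ← LinearMap.comp_apply, LinearMap.lTensor_comp_rTensor,
    LinearMap.rTensor_comp_lTensor]

section ses
variable {f : A →ₗ[R] B} {g : B →ₗ[R] C} (hf : Function.Injective f)
    (hg : Function.Surjective g) (h : Function.Exact f g)
include hf hg h

/-- Tor-independence passes to the kernel of a surjection between Tor-independent modules; the
proof is a diagram chase in the short exact sequence of complexes obtained by tensoring with `Q`. -/
lemma TorAcyc.left (hB : TorAcyc Q B) (hC : TorAcyc Q C) : TorAcyc Q A := by
  intro i y
  constructor
  · intro hy
    obtain ⟨z, hz⟩ := (hB i (f.rTensor _ y)).mp (by rw [comm_tensor, hy, map_zero])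
    obtain ⟨w, hw⟩ := (hC (i+1) (g.rTensor _ z)).mp (by
      rw [comm_tensor]
      erw [hz]
      exact (rTensor_exact _ h hg).apply_apply_eq_zero y)
    obtain ⟨w', rfl⟩ := LinearMap.rTensor_surjective _ hg w
    obtain ⟨v, hv⟩ := ((rTensor_exact (Q.complex.X (i+2)) h hg)
      (z - (Q.complex.d (i+3) (i+2)).hom.lTensor B w')).mp (by
        rw [map_sub, ← comm_tensor]
        erw [hw]
        exact sub_self _)
    have := flat_res Q (i+1)
    refine ⟨v, Module.Flat.rTensor_preserves_injective_linearMap f hf ?_⟩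
    rw [← comm_tensor, hv, map_sub, lTensor_d_d, sub_zero]
    exact hz
  · rintro ⟨x, rfl⟩
    exact lTensor_d_d Q A i x

/-- A short exact sequence with Tor-independent quotient `C` stays left exact after `⊗ N`. -/
lemma TorAcyc.rTensor_injective (hC : TorAcyc Q C) : Function.Injective (f.rTensor N) := by
  rw [injective_iff_map_eq_zero]
  intro x hx
  obtain ⟨ε, hε⟩ : ∃ ε : Q.complex.X 0 ⟶ ModuleCat.of R N, ε = Q.π.f 0 := ⟨Q.π.f 0, rfl⟩
  have hw : Q.complex.d 1 0 ≫ ε = 0 := by rw [hε]; exact Q.complex_d_comp_π_f_zero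
  have hexact : Function.Exact (Q.complex.d 1 0).hom ε.hom := by
    subst hε
    exact (ShortComplex.ShortExact.moduleCat_exact_iff_function_exact _).mp Q.exact₀
  have hepi : Function.Surjective ε.hom := by
    rw [← ModuleCat.epi_iff_surjective]; subst hε; exact inferInstanceAs (Epi (Q.π.f 0))
  obtain ⟨y, rfl⟩ := LinearMap.lTensor_surjective A hepi x
  obtain ⟨z, hz⟩ := ((lTensor_exact B hexact hepi) (f.rTensor _ y)).mp (by
    rw [comm_tensor]; exact hx)
  obtain ⟨w, hw⟩ := (hC 0 (g.rTensor _ z)).mp (by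
      rw [comm_tensor]
      erw [hz]
      exact (rTensor_exact _ h hg).apply_apply_eq_zero y)
  obtain ⟨w', rfl⟩ := LinearMap.rTensor_surjective _ hg w
  obtain ⟨v, hv⟩ := ((rTensor_exact (Q.complex.X 1) h hg)
      (z - (Q.complex.d 2 1).hom.lTensor B w')).mp (by
        rw [map_sub, ← comm_tensor]
        erw [hw]
        exact sub_self _)
  have := flat_res Q 0
  have hy : (Q.complex.d 1 0).hom.lTensor A v = y := by
    refine Module.Flat.rTensor_preserves_injective_linearMap f hf ?_
    rw [← comm_tensor, hv, map_sub, lTensor_d_d, sub_zero]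
    exact hz
  rw [← hy]
  exact (lTensor_exact A hexact hepi).apply_apply_eq_zero v

end ses

lemma TorAcyc.of_flat [Module.Flat R A] : TorAcyc Q A := by
  intro i
  exact Module.Flat.lTensor_exact A
    ((ShortComplex.ShortExact.moduleCat_exact_iff_function_exact _).mp (Q.exact_succ i))

/-- Tor-independence passes along a decomposition of the identity through `A`. -/
lemma TorAcyc.of_sum {ι : Type} (s : Finset ι) (u : ι → A →ₗ[R] B) (v : ι → B →ₗ[R] A)
    (huv : ∑ i ∈ s, u i ∘ₗ v i = LinearMap.id) (hA : TorAcyc Q A) : TorAcyc Q B := by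
  intro i y
  constructor
  · intro hy
    have hy' : ∀ j, ∃ z, (Q.complex.d (i+2) (i+1)).hom.lTensor A z = (v j).rTensor _ y := by
      intro j
      exact (hA i ((v j).rTensor _ y)).mp (by rw [comm_tensor, hy, map_zero])
    choose z hz using hy'
    refine ⟨∑ j ∈ s, (u j).rTensor _ (z j), ?_⟩
    rw [map_sum]
    have : y = ∑ j ∈ s, (u j).rTensor _ ((v j).rTensor _ y) := by
      conv_lhs => rw [← LinearMap.id_apply (R := R) y, ← LinearMap.rTensor_id, ← huv]
      simp only [← LinearMap.comp_apply, ← LinearMap.rTensor_comp]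
      rw [← LinearMap.sum_apply]
      congr 1
      exact map_sum (LinearMap.rTensorHom _) _ _
    conv_rhs => rw [this]
    refine Finset.sum_congr rfl fun j _ => ?_
    rw [comm_tensor, hz]
  · rintro ⟨x, rfl⟩
    exact lTensor_d_d Q B i x

lemma torAcyc_of_torMod {M : Type} [AddCommGroup M] [Module R M]
    (htor : ∀ i : ℕ, 0 < i → Subsingleton (torMod R M N i)) : TorAcyc Q M := by
  intro i
  have h := htor (i+1) (Nat.succ_pos i)
  rw [← ModuleCat.isZero_iff_subsingleton] at h
  have h2 : IsZero ((((MonoidalCategory.tensorLeft (ModuleCat.of R M)).mapHomologicalComplex _).obj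
      Q.complex).homology (i+1)) :=
    h.of_iso (Q.isoLeftDerivedObj (MonoidalCategory.tensorLeft (ModuleCat.of R M)) (i+1)).symm
  rw [← HomologicalComplex.exactAt_iff_isZero_homology,
    HomologicalComplex.exactAt_iff' _ (i+2) (i+1) i (by simp) (by simp)] at h2
  exact (ShortComplex.ShortExact.moduleCat_exact_iff_function_exact _).mp h2

end TorAcyclic

/-! ### Cycles, boundaries and homology -/

section Complex
open TensorProduct

variable {R : Type} [CommRing R] (P : ChainComplex (ModuleCat.{0} R) ℤ)

/-- The differential `P_{i+1} → P_i` as a linear map. -/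
def dd (i : ℤ) : P.X (i+1) →ₗ[R] P.X i := (P.d (i+1) i).hom

/-- Cycles of `P` in degree `i + 1`. -/
abbrev cyc (i : ℤ) : Submodule R (P.X (i+1)) := LinearMap.ker (dd P i)

/-- Boundaries of `P` in degree `i`. -/
abbrev bdr (i : ℤ) : Submodule R (P.X i) := LinearMap.range (dd P i)

lemma bdr_le_cyc (i : ℤ) : bdr P (i+1) ≤ cyc P i := by
  rintro _ ⟨x, rfl⟩
  have : (P.d (i+1+1) (i+1) ≫ P.d (i+1) i) = 0 := P.d_comp_d _ _ _
  exact congrArg (fun f => f.hom x) this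

/-- The quotient map from cycles to homology, for a short complex of modules. -/
lemma exists_ker_to (S : ShortComplex (ModuleCat.{0} R)) {H : Type} [AddCommGroup H] [Module R H]
    (e : S.homology ≅ ModuleCat.of R H) :
    ∃ q : LinearMap.ker S.g.hom →ₗ[R] H, Function.Surjective q ∧
      ∀ z, q z = 0 ↔ (z : S.X₂) ∈ LinearMap.range S.f.hom := by
  let e2 : ModuleCat.of R (LinearMap.ker S.g.hom ⧸ LinearMap.range S.moduleCatToCycles) ≅
      ModuleCat.of R H := S.moduleCatHomologyIso.symm ≪≫ e
  let e3 := e2.toLinearEquiv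
  refine ⟨e3.toLinearMap ∘ₗ (LinearMap.range S.moduleCatToCycles).mkQ,
    e3.surjective.comp (Submodule.mkQ_surjective _), fun z => ?_⟩
  have h1 : (e3.toLinearMap ∘ₗ (LinearMap.range S.moduleCatToCycles).mkQ) z = 0 ↔
      (LinearMap.range S.moduleCatToCycles).mkQ z = 0 := e3.map_eq_zero_iff
  rw [h1, Submodule.mkQ_apply, Submodule.Quotient.mk_eq_zero]
  constructor
  · rintro ⟨x, rfl⟩
    exact ⟨x, rfl⟩
  · rintro ⟨x, hx⟩
    exact ⟨x, Subtype.ext hx⟩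

/-- The quotient map from cycles to homology. -/
lemma exists_cyc_to {H : Type} [AddCommGroup H] [Module R H] (i : ℤ)
    (h : Nonempty (P.homology (i+1) ≅ ModuleCat.of R H)) :
    ∃ q : cyc P i →ₗ[R] H, Function.Surjective q ∧
      Function.Exact (Submodule.inclusion (bdr_le_cyc P i)) q := by
  obtain ⟨e⟩ := h
  let S := P.sc' (i+1+1) (i+1) i
  have e1 : P.homology (i+1) ≅ S.homology :=
    ShortComplex.homologyMapIso (P.isoSc' (i+1+1) (i+1) i (by simp) (by simp))
  obtain ⟨q, hq, hq'⟩ := exists_ker_to S (e1.symm ≪≫ e)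
  refine ⟨q, hq, fun z => (hq' z).trans ?_⟩
  constructor
  · intro h
    exact ⟨⟨z.1, h⟩, rfl⟩
  · rintro ⟨y, rfl⟩
    exact y.2

lemma cyc_exact (i : ℤ) : Function.Exact (cyc P i).subtype (dd P i).rangeRestrict := by
  intro x
  rw [LinearMap.rangeRestrict, ← Subtype.coe_inj]
  simp

end Complex

/-! ### Counting Ext along the tensored complex -/

section Tensored
open TensorProduct

variable {R : Type} [CommRing R] {M N K : Type} [AddCommGroup M] [Module R M]
  [AddCommGroup N] [Module R N] [AddCommGroup K] [Module R K]

lemma sum_single_proj (m : ℕ) (M : Type) [AddCommGroup M] [Module R M] :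
    ∑ i : Fin m, (LinearMap.single R (fun _ : Fin m => M) i) ∘ₗ
      (LinearMap.proj i : (Fin m → M) →ₗ[R] M) = LinearMap.id := by
  refine LinearMap.ext fun x => ?_
  rw [LinearMap.sum_apply]
  exact LinearMap.sum_single_apply _ x

lemma rTensor_sum_id {A B : Type} [AddCommGroup A] [Module R A] [AddCommGroup B] [Module R B]
    (N : Type) [AddCommGroup N] [Module R N] {ι : Type} (s : Finset ι)
    (u : ι → A →ₗ[R] B) (v : ι → B →ₗ[R] A) (huv : ∑ i ∈ s, u i ∘ₗ v i = LinearMap.id) :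
    ∑ i ∈ s, (u i).rTensor N ∘ₗ (v i).rTensor N = LinearMap.id := by
  simp only [← LinearMap.rTensor_comp]
  rw [← LinearMap.rTensor_id, ← huv]
  exact (map_sum (LinearMap.rTensorHom N) _ _).symm

lemma ex_pow (m j : ℕ) (h : Subsingleton (EX R K (M ⊗[R] N) j)) :
    Subsingleton (EX R K ((Fin m → M) ⊗[R] N) j) :=
  ex_of_sum _ _ _ (rTensor_sum_id N _ _ _ (sum_single_proj (R := R) m M)) j h

lemma ex_of_pow (m j : ℕ) (hm : 0 < m) (h : Subsingleton (EX R K ((Fin m → M) ⊗[R] N) j)) :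
    Subsingleton (EX R K (M ⊗[R] N) j) := by
  refine ex_of_sum (Finset.univ : Finset (Fin 1)) _ _ (rTensor_sum_id N (Finset.univ : Finset (Fin 1))
    (fun _ => LinearMap.proj (⟨0, hm⟩ : Fin m))
    (fun _ => LinearMap.single R (fun _ : Fin m => M) ⟨0, hm⟩) ?_) j h
  ext x
  simp

lemma subsingleton_tensor (A N : Type) [AddCommGroup A] [Module R A] [AddCommGroup N] [Module R N]
    [Subsingleton A] : Subsingleton (A ⊗[R] N) := by
  refine subsingleton_of_forall_eq 0 fun x => ?_
  induction x using TensorProduct.induction_on with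
  | zero => rfl
  | tmul a n => rw [Subsingleton.elim a 0, zero_tmul]
  | add x y hx hy => rw [hx, hy, add_zero]

/-- Tensoring with a flat module preserves the Ext-vanishing that comes from a regular sequence. -/
lemma ex_flat_tensor (X : Type) [AddCommGroup X] [Module R X] [Module.Flat R X] (rs : List R)
    (hmem : ∀ r ∈ rs, r ∈ Module.annihilator R K)
    (hreg : RingTheory.Sequence.IsWeaklyRegular N rs) (j : ℕ) (hj : j < rs.length) :
    Subsingleton (EX R K (X ⊗[R] N) j) :=
  ex_subsingleton_of_isWeaklyRegular rs _ hmem hreg.isWeaklyRegular_lTensor j hj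

variable (P : ChainComplex (ModuleCat.{0} R) ℤ) (a : ℤ → ℕ) (b : ℤ)
  (hproj : ∀ i, Module.Flat R (P.X i)) (hb : ∀ i < b, Subsingleton (P.X i))
  (hH : ∀ i, Nonempty (P.homology i ≅ ModuleCat.of R (Fin (a i) → M)))
  (Q : ProjectiveResolution (ModuleCat.of R N)) (hQ : TorAcyc Q M)

section acyc
include hproj

lemma acyc_cyc (i : ℤ) (h : TorAcyc Q (bdr P i)) : TorAcyc Q (cyc P i) := by
  have := hproj (i+1)
  exact TorAcyc.left Q (cyc P i).injective_subtype (dd P i).surjective_rangeRestrict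
    (cyc_exact P i) (TorAcyc.of_flat Q) h

include hb hH hQ in
/-- Climbing up from the bottom of the complex, all boundaries are Tor-independent of `N`. -/
lemma acyc_bdr (i : ℤ) : TorAcyc Q (bdr P i) := by
  have low : ∀ i < b, TorAcyc Q (bdr P i) := by
    intro i hi
    have := hb i hi
    have : Module.Flat R (bdr P i) := inferInstance
    exact TorAcyc.of_flat Q
  rcases lt_or_ge i b with hi | hi
  · exact low i hi
  have key : ∀ i, b - 1 ≤ i → TorAcyc Q (bdr P i) := by
    intro i hi
    induction i, hi using Int.leInduction with
    | base => exact low _ (by omega)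
    | succ i hi ih =>
      obtain ⟨q, hq, hex⟩ := exists_cyc_to P i (hH (i+1))
      exact TorAcyc.left Q (Submodule.inclusion_injective _) hq hex
        (acyc_cyc P hproj Q i ih)
        (TorAcyc.of_sum Q _ _ _ (sum_single_proj (R := R) (a (i+1)) M) hQ)
  exact key i (by omega)

end acyc

/-- The tensored sequence `0 → Z_{i+1} ⊗ N → P_{i+1} ⊗ N → B_i ⊗ N → 0`. -/
structure CycSES (N : Type) [AddCommGroup N] [Module R N] (i : ℤ) : Prop where
  inj : Function.Injective ((cyc P i).subtype.rTensor N)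
  surj : Function.Surjective ((dd P i).rangeRestrict.rTensor N)
  exact : Function.Exact ((cyc P i).subtype.rTensor N) ((dd P i).rangeRestrict.rTensor N)

/-- The tensored sequence `0 → B_{i+1} ⊗ N → Z_{i+1} ⊗ N → H_{i+1} ⊗ N → 0`, with `H_{i+1}` a
power `M^m`. -/
def HomSES (M N : Type) [AddCommGroup M] [Module R M] [AddCommGroup N] [Module R N]
    (m : ℕ) (i : ℤ) : Prop :=
  ∃ q : cyc P i ⊗[R] N →ₗ[R] (Fin m → M) ⊗[R] N, Function.Surjective q ∧
    Function.Injective ((Submodule.inclusion (bdr_le_cyc P i)).rTensor N) ∧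
    Function.Exact ((Submodule.inclusion (bdr_le_cyc P i)).rTensor N) q

include hproj hb hH hQ in
lemma cycSES (i : ℤ) : CycSES P N i where
  inj := TorAcyc.rTensor_injective Q (cyc P i).injective_subtype
    (dd P i).surjective_rangeRestrict (cyc_exact P i) (acyc_bdr P a b hproj hb hH Q hQ i)
  surj := LinearMap.rTensor_surjective _ (dd P i).surjective_rangeRestrict
  exact := rTensor_exact _ (cyc_exact P i) (dd P i).surjective_rangeRestrict

include hH hQ in
lemma homSES (i : ℤ) : HomSES P M N (a (i+1)) i := by
  obtain ⟨q, hq, hex⟩ := exists_cyc_to P i (hH (i+1))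
  exact ⟨q.rTensor N, LinearMap.rTensor_surjective _ hq,
    TorAcyc.rTensor_injective Q (Submodule.inclusion_injective _) hq hex
      (TorAcyc.of_sum Q _ _ _ (sum_single_proj (R := R) (a (i+1)) M) hQ),
    rTensor_exact _ hex hq⟩

end Tensored

section Counting
open TensorProduct

variable {R : Type} [CommRing R] {M N : Type} [AddCommGroup M] [Module R M]
  [AddCommGroup N] [Module R N] (K : Type) [AddCommGroup K] [Module R K]
  (P : ChainComplex (ModuleCat.{0} R) ℤ) (a : ℤ → ℕ) (b s : ℤ) (d t : ℕ)
  (hb : ∀ i < b, Subsingleton (P.X i))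
  (hcyc : ∀ i, CycSES P N i) (hhom : ∀ i, HomSES P M N (a (i+1)) i)
  (ha : ∀ i, s < i → a i = 0)
  (hX : ∀ i, ∀ j < d, Subsingleton (EX R K (P.X i ⊗[R] N) j))
  (ht : ∀ j < t, Subsingleton (EX R K (M ⊗[R] N) j))

lemma ex_hom_zero {m : ℕ} (hm : m = 0) (j : ℕ) :
    Subsingleton (EX R K ((Fin m → M) ⊗[R] N) j) := by
  subst hm
  have := subsingleton_tensor (R := R) (Fin 0 → M) N
  exact ex_of_subsingleton j

include hcyc hX in
/-- If `depth (B_i ⊗ N) ≥ min (d, t + i - s + 1)`, in terms of Ext-vanishing, then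
`depth (Z_{i+1} ⊗ N) ≥ min (d, t + i - s + 2)`. -/
lemma ex_cyc_of_bdr (i : ℤ)
    (h : ∀ j < d, (j : ℤ) ≤ t + i - s → Subsingleton (EX R K (bdr P i ⊗[R] N) j))
    (j : ℕ) (hj : j < d) (hj' : (j : ℤ) ≤ t + (i + 1) - s) :
    Subsingleton (EX R K (cyc P i ⊗[R] N) j) := by
  rcases j with _ | j
  · exact ex_zero_of_injective (hcyc i).inj (hX _ _ hj)
  · exact ex_left_of (hcyc i).inj (hcyc i).surj (hcyc i).exact j
      (h j (by omega) (by push_cast at hj'; omega)) (hX _ _ hj)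

include hb hcyc hhom ha hX ht in
/-- Climbing up from the bottom of the complex: `Ext^j(K, B_i ⊗ N) = 0` for `j < d` and
`j ≤ t + i - s`. Going from `B_i` to `Z_{i+1}` gains one degree, up to `d`, and
going from `Z_{i+1}` to `B_{i+1}` loses nothing, except that the bound is capped at `t + 1` while
the homology is nonzero. -/
lemma ex_bdr (i : ℤ) :
    ∀ j < d, (j : ℤ) ≤ t + i - s → Subsingleton (EX R K (bdr P i ⊗[R] N) j) := by
  have low : ∀ i < b, ∀ j, Subsingleton (EX R K (bdr P i ⊗[R] N) j) := by
    intro i hi j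
    have := hb i hi
    have := subsingleton_tensor (R := R) (bdr P i) N
    exact ex_of_subsingleton j
  rcases lt_or_ge i b with hi | hi
  · exact fun j _ _ => low i hi j
  have key : ∀ i, b - 1 ≤ i →
      ∀ j < d, (j : ℤ) ≤ t + i - s → Subsingleton (EX R K (bdr P i ⊗[R] N) j) := by
    intro i hi
    induction i, hi using Int.leInduction with
    | base => exact fun j _ _ => low _ (by omega) j
    | succ i hi ih =>
      intro j hj hj'
      obtain ⟨q, hq, hinj, hex⟩ := hhom i
      have hc := ex_cyc_of_bdr K P s d t hcyc hX i ih
      rcases j with _ | j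
      · exact ex_zero_of_injective hinj (hc 0 hj (by omega))
      · refine ex_left_of hinj hq hex j ?_ (hc _ hj (by omega))
        rcases lt_or_ge s (i+1) with hs | hs
        · exact ex_hom_zero K (ha _ hs) j
        · exact ex_pow _ _ (ht j (by push_cast at hj'; omega))
  exact key i (by omega)

include hcyc hhom ha hX in
/-- Climbing down from the top of the complex: above degree `s` the complex is exact, so the depth
of the boundaries drops by at most one from each degree to the next lower one. -/
lemma ex_bdr_top (n : ℕ)
    (hbT : Subsingleton (bdr P (s+n))) (m : ℕ) (hm : m ≤ n) :
    ∀ i, i = s + n - m → ∀ j, j + m < d + 1 → Subsingleton (EX R K (bdr P i ⊗[R] N) j) := by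
  induction m with
  | zero =>
    intro i hi j _
    obtain rfl : i = s + n := by simpa using hi
    have := subsingleton_tensor (R := R) (bdr P (s + n)) N
    exact ex_of_subsingleton j
  | succ m ih =>
    intro i hi j hj
    push_cast at hi
    obtain ⟨q, hq, hinj, hex⟩ := hhom i
    have h1 := ih (by omega) (i+1) (by omega) (j+1) (by omega)
    have h2 : Subsingleton (EX R K (cyc P i ⊗[R] N) (j+1)) :=
      ex_mid_of hinj hq hex (j+1) h1 (ex_hom_zero K (ha _ (by omega)) _)
    exact ex_right_of (hcyc i).inj (hcyc i).surj (hcyc i).exact j (hX _ _ (by omega)) h2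

lemma bdr_subsingleton (i : ℤ) (h : Subsingleton (P.X (i+1))) : Subsingleton (bdr P i) := by
  refine ⟨?_⟩
  rintro ⟨_, x, rfl⟩ ⟨_, y, rfl⟩
  exact Subtype.ext (congrArg (dd P i) (Subsingleton.elim x y))

include hb hcyc hhom ha hX ht in
/-- The bound `d ≤ n + t`: otherwise the two estimates make `Ext^t(K, Z_s ⊗ N)` and
`Ext^{t+1}(K, B_s ⊗ N)` vanish, and with them `Ext^t(K, H_s ⊗ N)`. -/
lemma d_le (n : ℕ) (hT : ∀ i, s + n < i → Subsingleton (P.X i)) (has : 0 < a s)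
    (htne : ¬ Subsingleton (EX R K (M ⊗[R] N) t)) : d ≤ n + t := by
  by_contra! hlt
  have h1 := ex_bdr_top K P a s d hcyc hhom ha hX n
    (bdr_subsingleton P _ (hT _ (by omega))) n le_rfl s (by omega) (t+1) (by omega)
  obtain ⟨e, rfl⟩ : ∃ e, s = e + 1 := ⟨s - 1, by omega⟩
  have h2 := ex_cyc_of_bdr K P (e+1) d t hcyc hX e
    (ex_bdr K P a b (e+1) d t hb hcyc hhom ha hX ht e) t (by omega) (by omega)
  obtain ⟨q, hq, hinj, hex⟩ := hhom e
  exact htne (ex_of_pow _ _ has (ex_right_of hinj hq hex t h2 h1))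

include hb hcyc hhom ha hX ht in
/-- If `n + t` exceeds `d`, the top differential induces an injection on `Ext^d(K, - ⊗ N)`: it
factors as `P_T → B_{T-1} → Z_{T-1} → P_{T-1}` with `T = s + n`, and each factor is injective on
`Ext^d`. -/
lemma exMap_top_injective (n : ℕ) (hlt : d < n + t) (l : ℤ) (hl : l + 1 + 1 = s + n)
    (hT : Subsingleton (P.X (l+1+1+1))) :
    Function.Injective (exMap K ((dd P (l+1)).rTensor N) d) := by
  have hfac : (dd P (l+1)).rTensor N = (cyc P l).subtype.rTensor N ∘ₗ
      (Submodule.inclusion (bdr_le_cyc P l)).rTensor N ∘ₗ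
      (dd P (l+1)).rangeRestrict.rTensor N := by
    rw [← LinearMap.rTensor_comp, ← LinearMap.rTensor_comp]
    rfl
  have hcomp : ⇑(exMap K ((dd P (l+1)).rTensor N) d) =
      exMap K ((cyc P l).subtype.rTensor N) d ∘
      exMap K ((Submodule.inclusion (bdr_le_cyc P l)).rTensor N) d ∘
      exMap K ((dd P (l+1)).rangeRestrict.rTensor N) d := by
    funext x
    rw [hfac, exMap_comp, exMap_comp]
    rfl
  rw [hcomp]
  obtain ⟨q, hq, hinj, hex⟩ := hhom l
  refine Function.Injective.comp ?_ (Function.Injective.comp ?_ ?_)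
  · rcases d with _ | d
    · exact exMap_injective_zero (hcyc l).inj
    · refine exMap_injective_of (hcyc l).inj (hcyc l).surj (hcyc l).exact d ?_
      exact ex_bdr K P a b s _ t hb hcyc hhom ha hX ht l d (by omega) (by omega)
  · rcases d with _ | d
    · exact exMap_injective_zero hinj
    · refine exMap_injective_of hinj hq hex d ?_
      rcases lt_or_ge s (l+1) with hs | hs
      · exact ex_hom_zero K (ha _ hs) d
      · exact ex_pow _ _ (ht d (by omega))
  · refine exMap_injective_mid (hcyc (l+1)).inj (hcyc (l+1)).surj (hcyc (l+1)).exact d ?_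
    obtain ⟨q, hq, hinj, hex⟩ := hhom (l+1)
    have := bdr_subsingleton P _ hT
    have := subsingleton_tensor (R := R) (bdr P (l+1+1)) N
    refine ex_mid_of hinj hq hex d (ex_of_subsingleton d) ?_
    rcases lt_or_ge s (l+1+1) with hs | hs
    · exact ex_hom_zero K (ha _ hs) d
    · exact ex_pow _ _ (ht d (by omega))

end Counting

section Minimal
open TensorProduct IsLocalRing

variable {R : Type} [CommRing R] [IsLocalRing R] {N X Y : Type}
  [AddCommGroup N] [Module R N] [AddCommGroup X] [Module R X] [AddCommGroup Y] [Module R Y]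

/-- If the projective module `X` has an element `p ∉ 𝔪X`, some functional is `1` at `p`. -/
lemma exists_functional [Module.Projective R X] (p : X) (hp : p ∉ maximalIdeal R • (⊤ : Submodule R X)) :
    ∃ φ : X →ₗ[R] R, φ p = 1 := by
  suffices ∃ φ : X →ₗ[R] R, φ p ∉ maximalIdeal R by
    obtain ⟨φ, hφ⟩ := this
    have hu : IsUnit (φ p) := by simpa using hφ
    obtain ⟨u, hu⟩ := hu
    exact ⟨(u⁻¹ : Rˣ).val • φ, by simp [← hu]⟩
  by_contra! hall
  obtain ⟨σ, hσ⟩ := (Module.projective_def'.mp (inferInstance : Module.Projective R X))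
  apply hp
  have h1 : p = Finsupp.linearCombination R id (σ p) := (LinearMap.congr_fun hσ p).symm
  rw [h1, Finsupp.linearCombination_apply]
  refine Submodule.sum_mem _ fun x _ => ?_
  exact Submodule.smul_mem_smul (hall (Finsupp.lapply x ∘ₗ σ)) trivial

/-- If `Ext^d(k, N) ≠ 0`, a map injective on `Ext^d(k, - ⊗ N)` is injective modulo `𝔪`: for `p ∉ 𝔪X` the map
`p ⊗ -` is injective on `Ext^d(k, -)`, while `f p ∈ 𝔪Y` would make `f p ⊗ -` vanish there. -/
lemma mem_of_exMap_injective [Module.Projective R X] (f : X →ₗ[R] Y) (d : ℕ)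
    (hinj : Function.Injective (exMap (ResidueField R) (f.rTensor N) d))
    (hne : ¬ Subsingleton (EX R (ResidueField R) N d)) (p : X)
    (hp : f p ∈ maximalIdeal R • (⊤ : Submodule R Y)) :
    p ∈ maximalIdeal R • (⊤ : Submodule R X) := by
  by_contra hcon
  obtain ⟨φ, hφ⟩ := exists_functional p hcon
  -- `n ↦ p ⊗ n` is split by `φ`, hence injective on `Ext^d`
  have hmk : Function.Injective (exMap (ResidueField R) (TensorProduct.mk R X N p) d) := by
    refine Function.LeftInverse.injective
      (g := exMap (ResidueField R) ((TensorProduct.lid R N).toLinearMap ∘ₗ φ.rTensor N) d)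
      fun x => ?_
    rw [← exMap_comp]
    have : ((TensorProduct.lid R N).toLinearMap ∘ₗ φ.rTensor N) ∘ₗ TensorProduct.mk R X N p =
        LinearMap.id := by
      ext n
      simp [hφ]
    rw [this, exMap_id]
  -- `f p` is an `𝔪`-combination, so `n ↦ f p ⊗ n` is zero on `Ext^d(k, -)`
  have hzero : ∀ y ∈ maximalIdeal R • (⊤ : Submodule R Y), ∀ x,
      exMap (ResidueField R) (TensorProduct.mk R Y N y) d x = 0 := by
    intro y hy
    induction hy using Submodule.smul_induction_on' with
    | smul r hr y _ =>
      intro x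
      rw [map_smul, exMap_smul]
      refine smul_ex_eq_zero ?_ _ _
      rw [Module.mem_annihilator]
      intro m
      obtain ⟨c, rfl⟩ := residue_surjective m
      rw [Algebra.smul_def]
      have : algebraMap R (ResidueField R) r = 0 := by
        rwa [ResidueField.algebraMap_eq, residue_eq_zero_iff]
      rw [this, zero_mul]
    | add y _ z _ hy hz =>
      intro x
      rw [map_add, exMap_add, hy, hz, add_zero]
  refine hne (subsingleton_of_forall_eq 0 fun x => hmk (hinj ?_))
  rw [map_zero, map_zero, ← exMap_comp]
  exact hzero _ hp x

end Minimal

/-! ### Modules finitely generated up to projective summands -/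

section StablyFinite
open TensorProduct IsLocalRing

variable {R : Type} [CommRing R]

/-- `A` is finitely generated up to projective summands: `A ⊕ G ≅ K ⊕ L` with `K` finitely
generated and `G`, `L` projective of arbitrary rank. -/
def StabFin (R : Type) [CommRing R] (A : Type) [AddCommGroup A] [Module R A] : Prop :=
  ∃ K L G : ModuleCat.{0} R, Module.Finite R K ∧ Module.Projective R L ∧ Module.Projective R G ∧
    Nonempty ((A × G) ≃ₗ[R] (K × L))

variable {A B C X : Type} [AddCommGroup A] [Module R A] [AddCommGroup B] [Module R B]
  [AddCommGroup C] [Module R C] [AddCommGroup X] [Module R X]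

lemma StabFin.of_finite [Module.Finite R A] : StabFin R A :=
  ⟨ModuleCat.of R A, ModuleCat.of R PUnit, ModuleCat.of R PUnit, ‹_›,
    (inferInstance : Module.Projective R PUnit), (inferInstance : Module.Projective R PUnit),
    ⟨LinearEquiv.refl R _⟩⟩

/-- Schanuel's lemma. -/
lemma schanuel {Y : Type} [AddCommGroup Y] [Module R Y] [Module.Projective R X]
    [Module.Projective R Y] (p : X →ₗ[R] C) (q : Y →ₗ[R] C)
    (hp : Function.Surjective p) (hq : Function.Surjective q) :
    Nonempty ((LinearMap.ker p × Y) ≃ₗ[R] (LinearMap.ker q × X)) := by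
  obtain ⟨u, hu⟩ := Module.projective_lifting_property p q hp
  obtain ⟨v, hv⟩ := Module.projective_lifting_property q p hq
  replace hu : ∀ y, p (u y) = q y := LinearMap.congr_fun hu
  replace hv : ∀ x, q (v x) = p x := LinearMap.congr_fun hv
  let F : (LinearMap.ker p × Y) →ₗ[R] Y × X :=
    { toFun := fun z => (z.2 - v (z.1 + u z.2), z.1 + u z.2)
      map_add' := by
        intro a b
        ext <;> simp <;> abel
      map_smul' := by
        intro r a
        ext <;> simp [smul_sub] }
  let G : (LinearMap.ker q × X) →ₗ[R] X × Y :=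
    { toFun := fun z => (z.2 - u (z.1 + v z.2), z.1 + v z.2)
      map_add' := by
        intro a b
        ext <;> simp <;> abel
      map_smul' := by
        intro r a
        ext <;> simp [smul_sub] }
  have hF : ∀ z, (F z).1 ∈ LinearMap.ker q := by
    intro z
    have := z.1.2
    rw [LinearMap.mem_ker] at this
    simp [F, hu, hv, this]
  have hG : ∀ z, (G z).1 ∈ LinearMap.ker p := by
    intro z
    have := z.1.2
    rw [LinearMap.mem_ker] at this
    simp [G, hu, hv, this]
  refine ⟨LinearEquiv.ofLinearMap
    (((LinearMap.fst R Y X ∘ₗ F).codRestrict _ hF).prod (LinearMap.snd R Y X ∘ₗ F))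
    (((LinearMap.fst R X Y ∘ₗ G).codRestrict _ hG).prod (LinearMap.snd R X Y ∘ₗ G)) ?_ ?_⟩
  · refine LinearMap.ext fun z => ?_
    ext
    · simp [F, G]
    · simp [F, G]
  · refine LinearMap.ext fun z => ?_
    ext
    · simp [F, G]
    · simp [F, G]

lemma StabFin.of_equiv (e : A ≃ₗ[R] B) (h : StabFin R A) : StabFin R B := by
  obtain ⟨K, L, G, hK, hL, hG, ⟨e'⟩⟩ := h
  exact ⟨K, L, G, hK, hL, hG, ⟨(e.symm.prodCongr (LinearEquiv.refl R G)).trans e'⟩⟩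

/-- Syzygies of stably finite modules are stably finite. -/
lemma StabFin.left [IsNoetherianRing R] [Module.Projective R X] {g : X →ₗ[R] C}
    (hg : Function.Surjective g) (hC : StabFin R C) : StabFin R (LinearMap.ker g) := by
  obtain ⟨K, L, G, hK, hL, hG, ⟨e⟩⟩ := hC
  obtain ⟨m, q0, hq0⟩ := Module.Finite.exists_fin' R K
  let p : X × G →ₗ[R] K × L := e.toLinearMap ∘ₗ g.prodMap LinearMap.id
  have hp : Function.Surjective p := e.surjective.comp (hg.prodMap Function.surjective_id)
  let q : (Fin m → R) × L →ₗ[R] K × L := q0.prodMap LinearMap.id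
  have hq : Function.Surjective q := hq0.prodMap Function.surjective_id
  obtain ⟨σ⟩ := schanuel p q hp hq
  -- the two kernels are the kernels of the first components
  let k1 : LinearMap.ker g ≃ₗ[R] LinearMap.ker p := LinearEquiv.ofLinearMap
    ((LinearMap.inl R X G ∘ₗ (LinearMap.ker g).subtype).codRestrict _ (by
      intro z; simp [p]))
    ((LinearMap.fst R X G ∘ₗ (LinearMap.ker p).subtype).codRestrict _ (by
      rintro ⟨z, hz⟩
      have := e.map_eq_zero_iff.mp (LinearMap.mem_ker.mp hz)
      exact congrArg Prod.fst this))
    (by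
      refine LinearMap.ext fun ⟨z, hz⟩ => ?_
      have := e.map_eq_zero_iff.mp (LinearMap.mem_ker.mp hz)
      refine Subtype.ext (Prod.ext rfl ?_)
      exact (congrArg Prod.snd this).symm)
    (by
      refine LinearMap.ext fun ⟨z, hz⟩ => ?_
      rfl)
  let k2 : LinearMap.ker q →ₗ[R] (Fin m → R) :=
    LinearMap.fst R (Fin m → R) L ∘ₗ (LinearMap.ker q).subtype
  have hk2 : Function.Injective k2 := by
    rw [injective_iff_map_eq_zero]
    rintro ⟨z, hz⟩ hz0
    have h0 : z.2 = 0 := congrArg Prod.snd (show q z = 0 from hz)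
    exact Subtype.ext (Prod.ext hz0 h0)
  have hfin : Module.Finite R (LinearMap.ker q) := Module.Finite.of_injective k2 hk2
  exact ⟨ModuleCat.of R (LinearMap.ker q), ModuleCat.of R (X × G),
    ModuleCat.of R ((Fin m → R) × L), hfin, (inferInstance : Module.Projective R (X × G)),
    (inferInstance : Module.Projective R ((Fin m → R) × L)),
    ⟨(k1.prodCongr (LinearEquiv.refl R _)).trans σ⟩⟩

/-- Extensions of stably finite modules by finite ones are stably finite. -/
lemma StabFin.mid [IsNoetherianRing R] [Module.Finite R A] {f : A →ₗ[R] C} {g : C →ₗ[R] B}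
    (hex : Function.Exact f g) (hg : Function.Surjective g) (hB : StabFin R B) :
    StabFin R C := by
  obtain ⟨K, L, G, hK, hL, hG, ⟨e⟩⟩ := hB
  let p : C × G →ₗ[R] K × L := e.toLinearMap ∘ₗ g.prodMap LinearMap.id
  have hp : Function.Surjective p := e.surjective.comp (hg.prodMap Function.surjective_id)
  let π : C × G →ₗ[R] L := LinearMap.snd R K L ∘ₗ p
  have hπ : Function.Surjective π := fun y => by
    obtain ⟨x, hx⟩ := hp (0, y)
    exact ⟨x, congrArg Prod.snd hx⟩
  obtain ⟨σ, hσ⟩ := Module.projective_lifting_property π LinearMap.id hπ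
  replace hσ : ∀ y, π (σ y) = y := LinearMap.congr_fun hσ
  have hmem : ∀ z, (LinearMap.id - σ ∘ₗ π : C × G →ₗ[R] C × G) z ∈ LinearMap.ker π := by
    intro z
    simp [hσ]
  have hpi : ∀ z, p (f z, 0) = 0 := by
    intro z
    change e (g (f z), 0) = 0
    rw [hex.apply_apply_eq_zero, Prod.mk_zero_zero, map_zero]
  let eq : (C × G) ≃ₗ[R] (LinearMap.ker π × L) := LinearEquiv.ofLinearMap
    (((LinearMap.id - σ ∘ₗ π).codRestrict _ hmem).prod π)
    ((LinearMap.ker π).subtype.coprod σ)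
    (by
      refine LinearMap.ext fun ⟨⟨z, hz⟩, y⟩ => ?_
      have hz' : π z = 0 := hz
      refine Prod.ext (Subtype.ext ?_) ?_
      · simp [hσ, hz']
      · simp [hσ, hz'])
    (by
      refine LinearMap.ext fun z => ?_
      simp)
  let i : A →ₗ[R] LinearMap.ker π := (LinearMap.inl R C G ∘ₗ f).codRestrict _ (by
    intro z
    exact congrArg Prod.snd (hpi z))
  let ρ : LinearMap.ker π →ₗ[R] K := LinearMap.fst R K L ∘ₗ p ∘ₗ (LinearMap.ker π).subtype
  have hiρ : LinearMap.range i = LinearMap.ker ρ := by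
    ext ⟨z, hz⟩
    constructor
    · rintro ⟨w, hw⟩
      rw [← hw, LinearMap.mem_ker]
      exact congrArg Prod.fst (hpi w)
    · intro hz2
      have hpz : p z = 0 := Prod.ext hz2 hz
      have hgz := e.map_eq_zero_iff.mp hpz
      obtain ⟨w, hw⟩ := (hex z.1).mp (congrArg Prod.fst hgz)
      refine ⟨w, Subtype.ext (Prod.ext hw ?_)⟩
      exact (congrArg Prod.snd hgz).symm
  have : IsNoetherian R (LinearMap.ker π) := isNoetherian_of_range_eq_ker i ρ hiρ
  exact ⟨ModuleCat.of R (LinearMap.ker π), L, G, (inferInstance : Module.Finite R (LinearMap.ker π)),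
    hL, hG, ⟨eq⟩⟩

section complex
variable (P : ChainComplex (ModuleCat.{0} R) ℤ)

/-- The cokernel of `P_{i+1} → P_i`. -/
abbrev coker (i : ℤ) : Type := P.X i ⧸ bdr P i

/-- The sequence `H_{i+1} → P_{i+1}/B_{i+1} → B_i → 0`. -/
lemma exists_coker_ses {H : Type} [AddCommGroup H] [Module R H] (i : ℤ)
    (h : Nonempty (P.homology (i+1) ≅ ModuleCat.of R H)) :
    ∃ (f : H →ₗ[R] coker P (i+1)) (g : coker P (i+1) →ₗ[R] bdr P i), Function.Exact f g ∧
      Function.Surjective g := by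
  obtain ⟨q, hq, hex⟩ := exists_cyc_to P i h
  have hle : LinearMap.ker q ≤ LinearMap.ker ((bdr P (i+1)).mkQ ∘ₗ (cyc P i).subtype) := by
    intro z hz
    obtain ⟨w, rfl⟩ := (hex z).mp hz
    simp [w.2]
  let f : H →ₗ[R] coker P (i+1) :=
    (LinearMap.ker q).liftQ _ hle ∘ₗ (q.quotKerEquivOfSurjective hq).symm.toLinearMap
  have hf : ∀ z, f (q z) = (bdr P (i+1)).mkQ z.1 := by
    intro z
    have : (q.quotKerEquivOfSurjective hq).symm (q z) = (LinearMap.ker q).mkQ z := by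
      rw [LinearEquiv.symm_apply_eq]; rfl
    simp only [f, LinearMap.comp_apply, LinearEquiv.coe_coe, this]
    rfl
  refine ⟨f, (bdr P (i+1)).liftQ (dd P i).rangeRestrict ?_, ?_, ?_⟩
  · rintro x hx
    exact Subtype.ext (bdr_le_cyc P i hx)
  · intro x
    obtain ⟨x, rfl⟩ := Submodule.mkQ_surjective _ x
    constructor
    · intro hx
      exact ⟨q ⟨x, congrArg Subtype.val hx⟩, hf _⟩
    · rintro ⟨y, hy⟩
      obtain ⟨z, rfl⟩ := hq y
      rw [← hy, hf]
      exact Subtype.ext z.2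
  · intro y
    obtain ⟨x, rfl⟩ := (dd P i).surjective_rangeRestrict y
    exact ⟨(bdr P (i+1)).mkQ x, rfl⟩

/-- All the modules `P_i / B_i` are stably finite: `B_i` is a syzygy of `P_i / B_i`, and
`P_{i+1} / B_{i+1}` is an extension of `B_i` by the finite module `H_{i+1}`. -/
lemma stabFin_coker [IsNoetherianRing R] {M : Type} [AddCommGroup M] [Module R M]
    [Module.Finite R M] (a : ℤ → ℕ) (b : ℤ)
    (hproj : ∀ i, Module.Projective R (P.X i)) (hb : ∀ i < b, Subsingleton (P.X i))
    (hH : ∀ i, Nonempty (P.homology i ≅ ModuleCat.of R (Fin (a i) → M))) (i : ℤ) :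
    StabFin R (coker P i) := by
  have low : ∀ i < b, StabFin R (coker P i) := by
    intro i hi
    have := hb i hi
    exact StabFin.of_finite
  rcases lt_or_ge i b with hi | hi
  · exact low i hi
  have key : ∀ i, b - 1 ≤ i → StabFin R (coker P i) := by
    intro i hi
    induction i, hi using Int.leInduction with
    | base => exact low _ (by omega)
    | succ i hi ih =>
      obtain ⟨f, g, hex, hg⟩ := exists_coker_ses P i (hH (i+1))
      have := hproj i
      refine StabFin.mid hex hg ?_
      exact StabFin.of_equiv (LinearEquiv.ofEq _ _ (Submodule.ker_mkQ (bdr P i)))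
        (StabFin.left (Submodule.mkQ_surjective _) ih)
  exact key i (by omega)

end complex

variable [IsLocalRing R]

/-- The elementwise form of injectivity modulo `𝔪` says that `f ⊗ R/𝔪` is injective. -/
lemma rTensor_residue_injective {f : X →ₗ[R] C}
    (h : ∀ p, f p ∈ maximalIdeal R • (⊤ : Submodule R C) → p ∈ maximalIdeal R • (⊤ : Submodule R X)) :
    Function.Injective (f.rTensor (R ⧸ maximalIdeal R)) := by
  have hsurj : ∀ x : X ⊗[R] (R ⧸ maximalIdeal R), ∃ p : X, p ⊗ₜ[R] 1 = x := by
    intro x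
    induction x using TensorProduct.induction_on with
    | zero => exact ⟨0, zero_tmul _ _⟩
    | tmul p c =>
      obtain ⟨r, rfl⟩ := Ideal.Quotient.mk_surjective c
      refine ⟨r • p, ?_⟩
      rw [smul_tmul]
      congr 1
      rw [Algebra.smul_def, mul_one]
      rfl
    | add x y hx hy =>
      obtain ⟨p, rfl⟩ := hx
      obtain ⟨p', rfl⟩ := hy
      exact ⟨p + p', add_tmul _ _ _⟩
  rw [injective_iff_map_eq_zero]
  intro x hx
  obtain ⟨p, rfl⟩ := hsurj x
  have htm : ∀ (X : Type) [AddCommGroup X] [Module R X] (p : X),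
      (p ⊗ₜ[R] (1 : R ⧸ maximalIdeal R) = 0 ↔ p ∈ maximalIdeal R • (⊤ : Submodule R X)) := by
    intro X _ _ p
    rw [← (TensorProduct.tensorQuotEquivQuotSMul X (maximalIdeal R)).map_eq_zero_iff,
      ← Submodule.Quotient.mk_eq_zero]
    have : (TensorProduct.tensorQuotEquivQuotSMul X (maximalIdeal R)) (p ⊗ₜ 1) =
        Submodule.Quotient.mk p := by
      have := TensorProduct.tensorQuotEquivQuotSMul_tmul_mk (maximalIdeal R) p 1
      rw [one_smul] at this
      exact this
    rw [this]
  rw [LinearMap.rTensor_tmul] at hx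
  exact (htm X p).mpr (h p ((htm C _).mp hx))

/-- If `X → Y → D → 0` is exact with `X → Y` injective modulo `𝔪`, `Y` projective and `D` stably
finite, then `D` is projective: `𝔪 ⊗ D → D` is injective, and the local criterion applies to the
finitely generated part of `D`. -/
lemma projective_of_stabFin [IsNoetherianRing R] {Y D : Type} [AddCommGroup Y] [Module R Y]
    [AddCommGroup D] [Module R D] [Module.Projective R Y] {f : X →ₗ[R] Y} {g : Y →ₗ[R] D}
    (hex : Function.Exact f g) (hg : Function.Surjective g)
    (hf : ∀ p, f p ∈ maximalIdeal R • (⊤ : Submodule R Y) →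
      p ∈ maximalIdeal R • (⊤ : Submodule R X))
    (hD : StabFin R D) : Module.Projective R D := by
  have hI : Function.Injective ((maximalIdeal R).subtype.rTensor D) := by
    rw [← LinearMap.lTensor_inj_iff_rTensor_inj]
    exact lTensor_injective_of_exact_of_exact_of_rTensor_injective
      hex hg (LinearMap.exact_subtype_mkQ _) (Submodule.mkQ_surjective _)
      (rTensor_residue_injective hf)
      (Module.Flat.lTensor_preserves_injective_linearMap _ Subtype.val_injective)
  obtain ⟨K, L, G, hK, hL, hG, ⟨e⟩⟩ := hD
  have hIG : Function.Injective ((maximalIdeal R).subtype.rTensor G) :=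
    Module.Flat.rTensor_preserves_injective_linearMap _ Subtype.val_injective
  let i : K →ₗ[R] D × G := e.symm.toLinearMap ∘ₗ LinearMap.inl R K L
  let p : D × G →ₗ[R] K := LinearMap.fst R K L ∘ₗ e.toLinearMap
  have hid : (p ∘ₗ LinearMap.inl R D G) ∘ₗ (LinearMap.fst R D G ∘ₗ i) +
      (p ∘ₗ LinearMap.inr R D G) ∘ₗ (LinearMap.snd R D G ∘ₗ i) = LinearMap.id := by
    refine LinearMap.ext fun x => ?_
    simp only [LinearMap.add_apply, LinearMap.comp_apply, ← map_add]
    simp [i, p]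
  have hIK : Function.Injective ((maximalIdeal R).subtype.rTensor K) := by
    rw [injective_iff_map_eq_zero]
    intro x hx
    have h1 : (LinearMap.fst R D G ∘ₗ i).lTensor (maximalIdeal R) x = 0 := by
      apply hI
      rw [← comm_tensor, hx, map_zero, map_zero]
    have h2 : (LinearMap.snd R D G ∘ₗ i).lTensor (maximalIdeal R) x = 0 := by
      apply hIG
      rw [← comm_tensor, hx, map_zero, map_zero]
    rw [← LinearMap.id_apply (R := R) x, ← LinearMap.lTensor_id, ← hid, LinearMap.lTensor_add,
      LinearMap.add_apply, LinearMap.lTensor_comp _ (p ∘ₗ LinearMap.inl R D G),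
      LinearMap.lTensor_comp _ (p ∘ₗ LinearMap.inr R D G),
      LinearMap.comp_apply, LinearMap.comp_apply, h1, h2, map_zero, map_zero, add_zero]
  have : Module.FinitePresentation R K := Module.finitePresentation_of_finite R K
  have := Module.free_of_maximalIdeal_rTensor_injective hIK
  refine Module.Projective.of_split (e.toLinearMap ∘ₗ LinearMap.inl R D G)
    (LinearMap.fst R D G ∘ₗ e.symm.toLinearMap) ?_
  ext x
  simp

/-- A map `X → Y` that is injective modulo `𝔪`, with projective cokernel and finitely generated
kernel, is injective: the kernel is a direct summand of `X` contained in `𝔪X`. -/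
lemma ker_eq_bot_of_split {Y : Type} [AddCommGroup Y] [Module R Y] [Module.Projective R Y]
    {f : X →ₗ[R] Y} [Module.Finite R (LinearMap.ker f)]
    (hf : ∀ p, f p ∈ maximalIdeal R • (⊤ : Submodule R Y) →
      p ∈ maximalIdeal R • (⊤ : Submodule R X))
    (hD : Module.Projective R (Y ⧸ LinearMap.range f)) : LinearMap.ker f = ⊥ := by
  -- the image of `f` is a direct summand of `Y`, hence projective
  obtain ⟨τ, hτ⟩ := Module.projective_lifting_property (LinearMap.range f).mkQ LinearMap.id
    (Submodule.mkQ_surjective _)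
  replace hτ : ∀ y, (LinearMap.range f).mkQ (τ y) = y := LinearMap.congr_fun hτ
  let ρ : Y →ₗ[R] LinearMap.range f :=
    (LinearMap.id - τ ∘ₗ (LinearMap.range f).mkQ).codRestrict _ (by
      intro y
      have h0 : (LinearMap.range f).mkQ (y - τ ((LinearMap.range f).mkQ y)) = 0 := by
        rw [map_sub, hτ, sub_self]
      exact (Submodule.Quotient.mk_eq_zero _).mp h0)
  have : Module.Projective R (LinearMap.range f) := by
    refine Module.Projective.of_split (LinearMap.range f).subtype ρ ?_
    refine LinearMap.ext fun y => Subtype.ext ?_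
    have h0 : (LinearMap.range f).mkQ y.1 = 0 := by simp
    change y.1 - τ ((LinearMap.range f).mkQ y.1) = y.1
    rw [h0, map_zero, sub_zero]
  -- so the kernel is a direct summand of `X`
  obtain ⟨σ, hσ⟩ := Module.projective_lifting_property f.rangeRestrict LinearMap.id
    f.surjective_rangeRestrict
  replace hσ : ∀ y, f (σ y) = y := fun y => congrArg Subtype.val (LinearMap.congr_fun hσ y)
  let π : X →ₗ[R] LinearMap.ker f := (LinearMap.id - σ ∘ₗ f.rangeRestrict).codRestrict _ (by
    intro x
    simp [hσ])
  have hle : (⊤ : Submodule R (LinearMap.ker f)) ≤ maximalIdeal R • ⊤ := by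
    rintro z -
    have h1 : z.1 ∈ maximalIdeal R • (⊤ : Submodule R X) := hf z.1 (by
      rw [show f z.1 = 0 from z.2]; exact zero_mem _)
    have h2 := Submodule.mem_map_of_mem (f := π) h1
    rw [Submodule.map_smul''] at h2
    have h3 : π z.1 = z := by
      refine Subtype.ext ?_
      have h0 : f.rangeRestrict z.1 = 0 := Subtype.ext z.2
      change z.1 - σ (f.rangeRestrict z.1) = z.1
      rw [h0, map_zero, sub_zero]
    rw [h3] at h2
    have h6 : maximalIdeal R • Submodule.map π ⊤ ≤
        maximalIdeal R • (⊤ : Submodule R (LinearMap.ker f)) := smul_mono_right _ le_top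
    exact h6 h2
  have h4 := Submodule.eq_bot_of_le_smul_of_le_jacobson_bot (maximalIdeal R)
    (⊤ : Submodule R (LinearMap.ker f)) Module.Finite.fg_top hle
    (IsLocalRing.maximalIdeal_le_jacobson _)
  rw [Submodule.eq_bot_iff]
  intro z hz
  have h5 : (⟨z, hz⟩ : LinearMap.ker f) ∈ (⊤ : Submodule R (LinearMap.ker f)) := trivial
  rw [h4, Submodule.mem_bot] at h5
  exact congrArg Subtype.val h5

end StablyFinite

/-! ### Truncation and the depth formula -/

section Truncation

/-- The embedding of `ℕ` into `ℤ` with image `{i | i ≤ k}`, used to truncate chain complexes from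
above at degree `k`. -/
def truncEmb (k : ℤ) : (ComplexShape.up ℕ).Embedding (ComplexShape.down ℤ) :=
  ComplexShape.Embedding.mk' _ _ (fun n => k - n)
    (fun _ _ h => by dsimp at h; lia)
    (by intro i j; simp; lia)

lemma truncEmb_f (k : ℤ) (n : ℕ) : (truncEmb k).f n = k - n := rfl

instance (k : ℤ) : (truncEmb k).IsRelIff where
  rel' i j h := by
    have h1 : k - (j : ℤ) + 1 = k - i := h
    change i + 1 = j
    lia

instance (k : ℤ) : (truncEmb k).IsTruncGE where
  mem_next {j k'} h := ⟨j + 1, by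
    rw [truncEmb_f] at *
    have : k' + 1 = k - j := h
    push_cast; lia⟩

variable {R : Type} [CommRing R] (P : ChainComplex (ModuleCat.{0} R) ℤ)

lemma projective_opcycles (k : ℤ) (h : Module.Projective R (coker P k)) :
    Projective (P.opcycles k) := by
  have e : P.opcycles k ≅ ModuleCat.of R (coker P k) :=
    (P.opcyclesIsCokernel (k+1) k (by simp)).coconePointUniqueUpToIso
      (ModuleCat.cokernelIsColimit (P.d (k+1) k))
  have := (IsProjective.iff_projective (R := R) (coker P k)).mp h
  exact Projective.of_iso e.symm this

/-- If `P` is acyclic above degree `k` and `P_k/B_k` is projective, then `P` may be cut off in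
degree `k`. -/
lemma exists_trunc (k : ℤ) (hproj : ∀ i, Projective (P.X i))
    (hz : ∀ i, k < i → IsZero (P.homology i)) (hc : Module.Projective R (coker P k)) :
    ∃ P' : ChainComplex (ModuleCat.{0} R) ℤ, (∀ i, Projective (P'.X i)) ∧
      (∀ i, IsZero (P.X i) → IsZero (P'.X i)) ∧ (∀ i, k < i → IsZero (P'.X i)) ∧
      ∀ i, Nonempty (P'.homology i ≅ P.homology i) := by
  have hout : ∀ i, k < i → IsZero ((P.truncGE (truncEmb k)).X i) := by
    intro i hi
    refine HomologicalComplex.isZero_X_of_isStrictlySupported _ (truncEmb k) i fun n hn => ?_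
    rw [truncEmb_f] at hn
    lia
  have hin : ∀ i, i ≤ k → ∃ n : ℕ, (truncEmb k).f n = i := by
    intro i hi
    exact ⟨(k - i).toNat, by rw [truncEmb_f]; lia⟩
  refine ⟨P.truncGE (truncEmb k), fun i => ?_, fun i hi => ?_, hout, fun i => ?_⟩
  · rcases lt_or_ge k i with hi | hi
    · exact (hout i hi).projective
    obtain ⟨n, hn⟩ := hin i hi
    by_cases hB : (truncEmb k).BoundaryGE n
    · obtain rfl : i = k := by
        rcases n with _ | n
        · rw [truncEmb_f] at hn; simpa using hn.symm
        · exact absurd hB (ComplexShape.Embedding.not_boundaryGE_next _ (j := n) (by simp))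
      exact Projective.of_iso (P.truncGEXIsoOpcycles (truncEmb i) hn hB).symm
        (projective_opcycles P i hc)
    · exact Projective.of_iso (P.truncGEXIso (truncEmb k) hn hB).symm (hproj i)
  · exact IsZero.of_epi ((P.πTruncGE (truncEmb k)).f i) hi
  · rcases lt_or_ge k i with hi | hi
    · refine ⟨IsZero.iso ?_ (hz i hi)⟩
      rw [← HomologicalComplex.exactAt_iff_isZero_homology]
      exact ShortComplex.exact_of_isZero_X₂ _ (hout i hi)
    · obtain ⟨n, hn⟩ := hin i hi
      have := P.quasiIsoAt_πTruncGE (truncEmb k) hn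
      exact ⟨(isoOfQuasiIsoAt (P.πTruncGE (truncEmb k)) i).symm⟩

end Truncation

section Final
open TensorProduct IsLocalRing

variable {R : Type} [CommRing R] {M N : Type} [AddCommGroup M] [Module R M]
  [AddCommGroup N] [Module R N]

/-- `P` witnesses `qpd M ≤ n`, with homology nonzero in degree `s` and exponents `a`. -/
structure Witness (M : Type) [AddCommGroup M] [Module R M]
    (P : ChainComplex (ModuleCat.{0} R) ℤ) (a : ℤ → ℕ) (b s : ℤ) (n : ℕ) : Prop where
  proj : ∀ i, Projective (P.X i)
  low : ∀ i < b, IsZero (P.X i)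
  hom : ∀ i, Nonempty (P.homology i ≅ ModuleCat.of R (Fin (a i) → M))
  top : 0 < a s
  high : ∀ i, s + n < i → IsZero (P.X i)

lemma not_isZero_pow [Nontrivial M] {m : ℕ} (hm : 0 < m) :
    ¬ IsZero (ModuleCat.of R (Fin m → M)) := by
  rw [ModuleCat.isZero_iff_subsingleton, not_subsingleton_iff_nontrivial]
  have : Nonempty (Fin m) := ⟨⟨0, hm⟩⟩
  exact (inferInstance : Nontrivial (Fin m → M))

lemma Witness.qpd_le [Nontrivial M] {P : ChainComplex (ModuleCat.{0} R) ℤ} {a : ℤ → ℕ} {b s : ℤ}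
    {n : ℕ} (w : Witness M P a b s n) : qpd R M ≤ n := by
  refine sInf_le ⟨n, rfl, P, ⟨w.proj, ⟨b, w.low⟩, a, ⟨s, w.top⟩, w.hom⟩, s, fun h => ?_, w.high⟩
  exact not_isZero_pow w.top (h.of_iso (w.hom s).some.symm)

/-- The infimum defining a finite `qpd` is attained. -/
lemma exists_witness (h : qpd R M ≠ ⊤) :
    ∃ (n : ℕ) (P : ChainComplex (ModuleCat.{0} R) ℤ) (a : ℤ → ℕ) (b s : ℤ),
      qpd R M = n ∧ Witness M P a b s n := by
  have hne : {c : ℕ∞ | ∃ n : ℕ, c = n ∧ ∃ P : ChainComplex (ModuleCat.{0} R) ℤ,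
    IsQuasiProjRes R P M ∧
    ∃ h : ℤ, ¬ IsZero (P.homology h) ∧ ∀ i, h + n < i → IsZero (P.X i)}.Nonempty := by
    by_contra! hempty
    exact h (by rw [qpd, hempty, sInf_empty])
  obtain ⟨n, hn, P, ⟨h1, ⟨b, h2⟩, a, h3, h4⟩, s, h5, h6⟩ := csInf_mem hne
  refine ⟨n, P, a, b, s, hn, h1, h2, h4, ?_, h6⟩
  by_contra! h0
  apply h5
  refine IsZero.of_iso ?_ (h4 s).some
  rw [ModuleCat.isZero_iff_subsingleton, Nat.le_zero.mp h0]
  exact (inferInstance : Subsingleton (Fin 0 → M))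

/-- In a minimal witness the homology vanishes above the distinguished degree. -/
lemma Witness.eq_zero [Nontrivial M] {P : ChainComplex (ModuleCat.{0} R) ℤ} {a : ℤ → ℕ} {b s : ℤ}
    {n : ℕ} (w : Witness M P a b s n) (hn : qpd R M = n) (i : ℤ) (hi : s < i) : a i = 0 := by
  by_contra h0
  have hi2 : i ≤ s + n := by
    by_contra! hlt
    refine not_isZero_pow (R := R) (M := M) (Nat.pos_of_ne_zero h0)
      (IsZero.of_iso ?_ (w.hom i).some.symm)
    rw [← HomologicalComplex.exactAt_iff_isZero_homology]
    exact ShortComplex.exact_of_isZero_X₂ _ (w.high i hlt)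
  have w' : Witness M P a b i (s + n - i).toNat :=
    ⟨w.proj, w.low, w.hom, Nat.pos_of_ne_zero h0, fun j hj => w.high j (by lia)⟩
  have := w'.qpd_le
  rw [hn, Nat.cast_le] at this
  lia

variable [IsNoetherianRing R] [IsLocalRing R] [Module.Finite R M] [Module.Finite R N]

/-- The depth formula and the Auslander–Buchsbaum formula combined:
`qpd M + depth (M ⊗ N) = depth N`. -/
theorem qpd_add_depth [Nontrivial M] [Nontrivial N] (hqpd : qpd R M ≠ ⊤)
    (htor : ∀ i : ℕ, 0 < i → Subsingleton (torMod R M N i)) :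
    qpd R M + moduleDepth R (M ⊗[R] N) = moduleDepth R N := by
  obtain ⟨n, P, a, b, s, hn, w⟩ := exists_witness hqpd
  have := nontrivial_tensor (R := R) (M := M) (N := N)
  obtain ⟨d, hd, -, hdne, ⟨rs, hlen, hmem, hreg⟩, -⟩ := exists_moduleDepth (R := R) (A := N)
  obtain ⟨t, ht, htz, htne, -, -⟩ := exists_moduleDepth (R := R) (A := M ⊗[R] N)
  obtain ⟨Q⟩ := HasProjectiveResolution.out (Z := ModuleCat.of R N)
  have hQ := torAcyc_of_torMod Q htor
  have hproj : ∀ i, Module.Projective R (P.X i) := fun i =>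
    (IsProjective.iff_projective (R := R) (P.X i)).mpr (w.proj i)
  have hflat : ∀ i, Module.Flat R (P.X i) := fun i => inferInstance
  have hb : ∀ i < b, Subsingleton (P.X i) := fun i hi =>
    ModuleCat.isZero_iff_subsingleton.mp (w.low i hi)
  have hT : ∀ i, s + n < i → Subsingleton (P.X i) := fun i hi =>
    ModuleCat.isZero_iff_subsingleton.mp (w.high i hi)
  have ha := w.eq_zero hn
  have hcyc := cycSES P a b hflat hb w.hom Q hQ
  have hhom := homSES P a w.hom Q hQ
  have hann : ∀ r ∈ rs, r ∈ Module.annihilator R (ResidueField R) := by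
    intro r hr
    rw [Module.mem_annihilator]
    intro m
    obtain ⟨c, rfl⟩ := residue_surjective m
    have : algebraMap R (ResidueField R) r = 0 := by
      rw [ResidueField.algebraMap_eq, residue_eq_zero_iff]
      exact hmem r hr
    rw [Algebra.smul_def, this, zero_mul]
  have hX : ∀ i, ∀ j < d, Subsingleton (EX R (ResidueField R) (P.X i ⊗[R] N) j) :=
    fun i j hj => ex_flat_tensor (P.X i) rs hann hreg.toIsWeaklyRegular j (by lia)
  have hle : d ≤ n + t :=
    d_le (ResidueField R) P a b s d t hb hcyc hhom ha hX htz n hT w.top htne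
  rw [hn, hd, ht]
  norm_cast
  refine le_antisymm ?_ hle
  by_contra! hlt
  obtain ⟨l, hl⟩ : ∃ l : ℤ, l + 1 + 1 = s + n := ⟨s + n - 2, by lia⟩
  have hT1 := hT (l+1+1+1) (by lia)
  have hmin := exMap_top_injective (ResidueField R) P a b s d t hb hcyc hhom ha hX htz n hlt l hl
    hT1
  have hfp := mem_of_exMap_injective (dd P (l+1)) d hmin hdne
  have hexact : Function.Exact (dd P (l+1)) (bdr P (l+1)).mkQ :=
    LinearMap.exact_iff.mpr (Submodule.ker_mkQ _)
  have hD : Module.Projective R (coker P (l+1)) :=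
    projective_of_stabFin hexact (Submodule.mkQ_surjective _) hfp
      (stabFin_coker P a b hproj hb w.hom (l+1))
  -- the top homology embeds in `P_T`, and is zero there since it splits off inside `𝔪 P_T`
  have h0 : a (l+1+1) = 0 := by
    obtain ⟨q, hq, hex⟩ := exists_cyc_to P (l+1) (w.hom _)
    have hqinj : Function.Injective q := by
      rw [injective_iff_map_eq_zero]
      intro z hz
      obtain ⟨⟨_, y, rfl⟩, rfl⟩ := (hex z).mp hz
      refine Subtype.ext ?_
      change dd P (l+1+1) y = 0
      rw [Subsingleton.elim y 0, map_zero]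
    have : Module.Finite R (cyc P (l+1)) := Module.Finite.of_injective q hqinj
    have hbot : cyc P (l+1) = ⊥ := ker_eq_bot_of_split hfp hD
    by_contra hne
    have : Subsingleton (cyc P (l+1)) := by rw [hbot]; infer_instance
    exact not_isZero_pow (R := R) (M := M) (Nat.pos_of_ne_zero hne)
      (ModuleCat.isZero_iff_subsingleton.mpr hq.subsingleton)
  have hn0 : 0 < n := by
    by_contra! hn0
    have := w.top
    rw [show s = l + 1 + 1 by lia, h0] at this
    exact lt_irrefl _ this
  have hz : ∀ i, l + 1 < i → IsZero (P.homology i) := by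
    intro i hi
    refine IsZero.of_iso ?_ (w.hom i).some
    rw [ModuleCat.isZero_iff_subsingleton, ha i (by lia)]
    exact (inferInstance : Subsingleton (Fin 0 → M))
  obtain ⟨P', h1, h2, h3, h4⟩ := exists_trunc P (l+1) w.proj hz hD
  have w' : Witness M P' a b s (n-1) := ⟨h1, fun i hi => h2 i (w.low i hi),
    fun i => ⟨(h4 i).some ≪≫ (w.hom i).some⟩, w.top, fun i hi => h3 i (by lia)⟩
  have := w'.qpd_le
  rw [hn, Nat.cast_le] at this
  lia

end Final

end QPD

/-- If `N` is Cohen–Macaulay, `qpd_R M < ∞` and `Tor_i(M,N) = 0` for `i > 0`, then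
`M ⊗ N` is Cohen–Macaulay iff `M` is `N`-quasi-perfect, i.e. `qpd_R M = grade(M,N)`. -/
theorem stmt14 (R : Type) [CommRing R] [IsNoetherianRing R] [IsLocalRing R]
    (M N : Type) [AddCommGroup M] [Module R M] [AddCommGroup N] [Module R N]
    [Module.Finite R M] [Module.Finite R N] (hM : Nontrivial M) (hN : Nontrivial N)
    (hNCM : moduleDim R N = moduleDepth R N) (hqpd : qpd R M ≠ ⊤)
    (htor : ∀ i : ℕ, 0 < i → Subsingleton (torMod R M N i)) :
    moduleDim R (TensorProduct R M N) = moduleDepth R (TensorProduct R M N) ↔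
      qpd R M = extGrade R M N := by
  have hdepth := QPD.qpd_add_depth hqpd htor
  have hdim := QPD.dim_tensor_add_extGrade (M := M) hNCM
  rw [← hNCM] at hdepth
  obtain ⟨D, hD⟩ := ENat.ne_top_iff_exists.mp (QPD.moduleDim_ne_top (R := R) (A := N))
  rw [← hD] at hdepth hdim
  generalize moduleDim R (TensorProduct R M N) = a at *
  generalize moduleDepth R (TensorProduct R M N) = t at *
  generalize extGrade R M N = g at *
  generalize qpd R M = n at *
  cases a <;> cases t <;> cases g <;> cases n <;> simp at hdepth hdim ⊢
  norm_cast at *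
  lia
end
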